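/- arXiv:math/0310473 — 2 statements merged into one kernel-verified Lean document; each statement's English description precedes it below -/
import Mathlib

section
/- Let K be a finite n-dimensional simplicial complex embedded in Euclidean space, let L be a subdivision of K, let τ^s be an s-simplex of L whose open simplex is contained in the open p-simplex ζ^p of K, and let α^r be an r-simplex of K having ζ^p as a proper face (p+1 ≤ r ≤ n). Then Σ_{i=s+1}^{r} Σ_{η^i} (−1)^{i−s} = (−1)^{r−s}, where the inner sum is over all i-simplices η^i of L whose open simplex is contained in the open simplex α^r and which have τ^s as a proper face. -/
open Filter MeasureTheory Geometry
open scoped BigOperators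

noncomputable section

attribute [local instance 0] Classical.propDecidable

namespace AngleDefectPaper

/-- `N`-dimensional Euclidean space. -/
abbrev Euc (N : ℕ) : Type := EuclideanSpace ℝ (Fin N)

variable {N : ℕ}

/-- The open simplex determined by a finite set of points: the intrinsic
(relative) interior of its convex hull. -/
def openSimplex (s : Finset (Euc N)) : Set (Euc N) :=
  intrinsicInterior ℝ (convexHull ℝ (s : Set (Euc N)))

/-- The normalized solid angle `α(η, σ)` of the simplex `σ` along its face `η`:
the fraction of a small sphere (in the affine span of `σ`) centered at a point of
the open face `η` that lies in `σ`, normalized so that the full sphere has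
measure `1`.  It is computed as the limiting fraction of a small ambient ball
centered at the centroid of `η` that lies in the cylinder obtained by thickening
`σ` in the directions orthogonal to its affine span. -/
def solidAngle (η σ : Finset (Euc N)) : ℝ :=
  limUnder (nhdsWithin (0 : ℝ) (Set.Ioi 0)) fun ε =>
    (volume (Metric.ball (η.centroid ℝ id) ε ∩
      {y : Euc N | ∃ c ∈ convexHull ℝ (σ : Set (Euc N)),
        ∃ w ∈ (vectorSpan ℝ (σ : Set (Euc N)))ᗮ, y = c + w})).toReal /
    (volume (Metric.ball (η.centroid ℝ id) ε)).toReal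

/-- `Tcone r` is (a realization in the plane of) the open cone on `r` points:
`r` half-open segments emanating from the origin in pairwise distinct
directions, glued at the origin.  For `r = 0` it is a single point. -/
def Tcone (r : ℕ) : Set (ℝ × ℝ) :=
  {0} ∪ ⋃ k ∈ Finset.range r,
    {p : ℝ × ℝ | ∃ t : ℝ, 0 ≤ t ∧ t < 1 ∧ p = t • ((1 : ℝ), (k : ℝ))}

/-- `x` has a neighborhood in `S` homeomorphic to `T_r × ℝ^{n-1}`, with the
homeomorphism taking `x` into the apex set `{cone point} × ℝ^{n-1}`. -/
def HasConeNbhd (n r : ℕ) (S : Set (Euc N)) (x : Euc N) : Prop :=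
  ∃ U : Set (Euc N), U ∈ nhdsWithin x S ∧ U ⊆ S ∧
    ∃ h : U ≃ₜ (Tcone r) × EuclideanSpace ℝ (Fin (n - 1)),
      ∀ hx : x ∈ U, ((h ⟨x, hx⟩).1 : ℝ × ℝ) = 0

/-- The set of points of `|K|` having a neighborhood of cone type `r`. -/
def csetAux (n : ℕ) (K : SimplicialComplex ℝ (Euc N)) (r : ℕ) : Set (Euc N) :=
  {x | x ∈ K.space ∧ HasConeNbhd n r K.space x}

/-- The sets `C_r(K)`: for `r ≠ 2` the points with a cone-type-`r` neighborhood,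
and `C_2(K)` is the complement in `|K|` of the union of the others. -/
def cset (n : ℕ) (K : SimplicialComplex ℝ (Euc N)) (r : ℕ) : Set (Euc N) :=
  if r = 2 then K.space \ ⋃ r' ∈ {r' : ℕ | r' ≠ 2}, csetAux n K r'
  else csetAux n K r

/-- The stratification rank `r(η) = r/2`, where `C_r(K)` is the (unique) set of
the stratification containing the open simplex of `η`. -/
def strRank (n : ℕ) (K : SimplicialComplex ℝ (Euc N)) (η : Finset (Euc N)) : ℝ :=
  if h : ∃ r : ℕ, r ≠ 2 ∧ openSimplex η ⊆ csetAux n K r then (h.choose : ℝ) / 2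
  else 1

/-- The set of `n`-simplices of `K` having `η` as a face. -/
def nSimplicesOn (n : ℕ) (K : SimplicialComplex ℝ (Euc N)) (η : Finset (Euc N)) :
    Set (Finset (Euc N)) :=
  {σ | σ ∈ K.faces ∧ σ.card = n + 1 ∧ η ⊆ σ}

/-- The generalized angle defect `D(η) = r(η) - Σ_{σⁿ ≻ η} α(η, σⁿ)`. -/
def defect (n : ℕ) (K : SimplicialComplex ℝ (Euc N)) (η : Finset (Euc N)) : ℝ :=
  strRank n K η - ∑ᶠ σ ∈ nSimplicesOn n K η, solidAngle η σ

/-- The angle defect sequence `a_m = 4 B_{m+2} (2^{m+2} - 1)/(m+2)`, where `B_k`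
is the `k`-th Bernoulli number (with the convention `B_1 = -1/2`). -/
def ads (m : ℕ) : ℚ :=
  4 * bernoulli (m + 2) * (2 ^ (m + 2) - 1) / (m + 2)

/-- The ascending stratified curvature of a simplex `τ` (of dimension
`p = τ.card - 1`) in the `n`-dimensional complex `K`. -/
def asc (n : ℕ) (K : SimplicialComplex ℝ (Euc N)) (τ : Finset (Euc N)) : ℝ :=
  (ads (τ.card - 1) : ℝ) * defect n K τ +
    (ads (τ.card - 1) : ℝ) / 2 *
      ∑ i ∈ Finset.Icc τ.card n,
        (-1 : ℝ) ^ (i - (τ.card - 1)) *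
          ∑ᶠ η ∈ {η : Finset (Euc N) | η ∈ K.faces ∧ η.card = i + 1 ∧ τ ⊆ η},
            defect n K η

/-- The stratified Euler characteristic `χˢ(K) = Σ_{η ∈ K} r(η) (-1)^{dim η}`. -/
def stratEuler (n : ℕ) (K : SimplicialComplex ℝ (Euc N)) : ℝ :=
  ∑ᶠ η ∈ K.faces, strRank n K η * (-1 : ℝ) ^ (η.card - 1)

/-- `fcount F k` is the number of `k`-dimensional simplices in `F`. -/
def fcount (F : Set (Finset (Euc N))) (k : ℕ) : ℕ :=
  {s ∈ F | s.card = k + 1}.ncard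

/-- The combinatorial Euler characteristic `χ(F) = Σ_k (-1)^k f_k(F)`. -/
def eulerChar (F : Set (Finset (Euc N))) : ℤ :=
  ∑ᶠ k : ℕ, (-1 : ℤ) ^ k * fcount F k

/-- The link of `η` in `K`: all simplices `ω` of `K` disjoint from `η` such
that the join `η ∗ ω` is a simplex of `K`. -/
def linkFaces (K : SimplicialComplex ℝ (Euc N)) (η : Finset (Euc N)) :
    Set (Finset (Euc N)) :=
  {ω | ω ∈ K.faces ∧ Disjoint η ω ∧ η ∪ ω ∈ K.faces}

/-- `K` is an `n`-dimensional simplicial complex. -/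
def IsNDim (n : ℕ) (K : SimplicialComplex ℝ (Euc N)) : Prop :=
  (∀ s ∈ K.faces, s.card ≤ n + 1) ∧ ∃ s ∈ K.faces, s.card = n + 1

/-- `L` is a subdivision of `K`: same underlying space, and every open simplex
of `L` is contained in an open simplex of `K`. -/
def IsSubdivision (K L : SimplicialComplex ℝ (Euc N)) : Prop :=
  L.space = K.space ∧ ∀ s ∈ L.faces, ∃ t ∈ K.faces, openSimplex s ⊆ openSimplex t

/-!
Let `x` be a point of the open simplex of `τ` and let `B` be a small ball around `x`. The open
simplices of `L` that lie in the open simplex of `α` and meet `B` are exactly those having `τ` as a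
face, so their intersections with `B` partition the intersection of the open simplex of `α` with
`B`. All these sets are bounded, convex and relatively open, and `(-1) ^ dim` is additive on such
partitions, being the Euler characteristic with compact support. Additivity is proved by induction
on the dimension, slicing with the level sets of a linear functional `l`: the image of a cell under
`l` is a point or a bounded open interval, and its sign is recovered from the jump `f t - f (t+)` of
the function `f` that records the sign of the slice over `t`.
-/

open scoped Topology

section SoleDrop

variable {X G ι : Type*} [LinearOrder X] [TopologicalSpace X] [AddCommGroup G]

/-- `f` differs from its right-hand limit only at `p`, where `f p - f (p+) = c`. The total drop is
the Euler characteristic of a step function with compact support: it is `1` for the indicator of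
a point and `-1` for the indicator of a bounded open interval. -/
def DropsOnlyAt (f : X → G) (p : X) (c : G) : Prop :=
  ∀ t, ∀ᶠ u in 𝓝[>] t, f t - f u = if t = p then c else 0

theorem dropsOnlyAt_indicator_singleton [OrderClosedTopology X] (p : X) (c : G) :
    DropsOnlyAt (({p} : Set X).indicator fun _ => c) p c := by
  intro t
  have hne : ∀ᶠ u in 𝓝[>] t, u ≠ p := by
    rcases eq_or_ne t p with rfl | htp
    · filter_upwards [self_mem_nhdsWithin] with u hu using ne_of_gt hu
    · exact nhdsWithin_le_nhds (isOpen_ne.mem_nhds htp)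
  filter_upwards [hne] with u hu
  simp [Set.indicator_apply, hu]

theorem dropsOnlyAt_indicator_Ioo [OrderTopology X] {p q : X} (hpq : p < q) (c : G) :
    DropsOnlyAt ((Set.Ioo p q).indicator fun _ => c) p (-c) := by
  intro t
  have hmem : ∀ᶠ u in 𝓝[>] t, u ∈ Set.Ioo p q ↔ t ∈ Set.Ico p q := by
    rcases lt_or_ge t p with htp | hpt
    · filter_upwards [nhdsWithin_le_nhds (Iio_mem_nhds htp)] with u hu
      exact iff_of_false (fun h => hu.not_gt h.1) fun h => htp.not_ge h.1
    rcases lt_or_ge t q with htq | hqt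
    · filter_upwards [self_mem_nhdsWithin, nhdsWithin_le_nhds (Iio_mem_nhds htq)] with u htu huq
      exact iff_of_true ⟨hpt.trans_lt htu, huq⟩ ⟨hpt, htq⟩
    · filter_upwards [self_mem_nhdsWithin] with u htu
      exact iff_of_false (fun h => (hqt.trans_lt htu).not_gt h.2) fun h => hqt.not_gt h.2
  filter_upwards [hmem] with u hu
  simp only [Set.indicator_apply, hu]
  rcases eq_or_ne t p with rfl | htp
  · simp [hpq]
  · simp [htp, lt_iff_le_and_ne, htp.symm]

theorem sum_eq_zero_of_dropsOnlyAt [OrderTopology X] [DenselyOrdered X] [NoMaxOrder X]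
    {s : Finset ι} {f : ι → X → G} {p : ι → X} {c : ι → G}
    (hdrop : ∀ i ∈ s, DropsOnlyAt (f i) (p i) (c i)) (hf : ∀ t, ∑ i ∈ s, f i t = 0) :
    ∑ i ∈ s, c i = 0 := by
  have hpoint (t : X) : ∑ i ∈ s with p i = t, c i = 0 := by
    obtain ⟨u, hu⟩ :=
      ((Filter.eventually_all_finset s).2 fun i hi => hdrop i hi t).exists
    calc ∑ i ∈ s with p i = t, c i = ∑ i ∈ s, (f i t - f i u) := by
          rw [Finset.sum_filter]
          exact Finset.sum_congr rfl fun i hi => by rw [hu i hi]; simp only [eq_comm]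
      _ = 0 := by rw [Finset.sum_sub_distrib, hf, hf, sub_zero]
  rw [← Finset.sum_fiberwise_of_maps_to fun i hi => Finset.mem_image_of_mem p hi]
  exact Finset.sum_eq_zero fun t _ => hpoint t

end SoleDrop

section RelOpenCell

variable {V : Type*} [NormedAddCommGroup V] [NormedSpace ℝ V] {A P : AffineSubspace ℝ V}
  {C U : Set V}

/-- `C` is a nonempty bounded convex set, open in the affine subspace `A`. As `C` is nonempty,
`A` is its affine span, so the dimension of the cell `C` is that of `A.direction`. -/
structure IsRelOpenCell (A : AffineSubspace ℝ V) (C : Set V) : Prop where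
  nonempty : C.Nonempty
  convex : Convex ℝ C
  isBounded : Bornology.IsBounded C
  exists_isOpen : ∃ U, IsOpen U ∧ C = (A : Set V) ∩ U

namespace IsRelOpenCell

theorem subset (h : IsRelOpenCell A C) : C ⊆ A := by
  obtain ⟨U, -, rfl⟩ := h.exists_isOpen
  exact Set.inter_subset_left

theorem inter_isOpen (h : IsRelOpenCell A C) (hU : IsOpen U) (hUconv : Convex ℝ U)
    (hne : (C ∩ U).Nonempty) : IsRelOpenCell A (C ∩ U) where
  nonempty := hne
  convex := h.convex.inter hUconv
  isBounded := h.isBounded.subset Set.inter_subset_left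
  exists_isOpen := by
    obtain ⟨W, hW, rfl⟩ := h.exists_isOpen
    exact ⟨W ∩ U, hW.inter hU, Set.inter_assoc _ _ _⟩

theorem inter_affineSubspace (h : IsRelOpenCell A C) (hne : (C ∩ P).Nonempty) :
    IsRelOpenCell (A ⊓ P) (C ∩ P) where
  nonempty := hne
  convex := h.convex.inter P.convex
  isBounded := h.isBounded.subset Set.inter_subset_left
  exists_isOpen := by
    obtain ⟨U, hU, rfl⟩ := h.exists_isOpen
    exact ⟨U, hU, Set.inter_right_comm _ _ _⟩

theorem image_eq_singleton (h : IsRelOpenCell A C) {l : V →L[ℝ] ℝ}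
    (hl : A.direction ≤ LinearMap.ker (l : V →ₗ[ℝ] ℝ)) : ∃ c, l '' C = {c} := by
  refine Set.exists_eq_singleton_iff_nonempty_subsingleton.2 ⟨h.nonempty.image l, ?_⟩
  rintro _ ⟨x, hx, rfl⟩ _ ⟨y, hy, rfl⟩
  simpa [sub_eq_zero] using hl (AffineSubspace.vsub_mem_direction (h.subset hx) (h.subset hy))

theorem isOpen_image (h : IsRelOpenCell A C) {l : V →L[ℝ] ℝ}
    (hl : ¬ A.direction ≤ LinearMap.ker (l : V →ₗ[ℝ] ℝ)) : IsOpen (l '' C) := by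
  obtain ⟨U, hU, rfl⟩ := h.exists_isOpen
  obtain ⟨v, hvA, hv⟩ := SetLike.not_le_iff_exists.1 hl
  have hv : l v ≠ 0 := by simpa using hv
  refine isOpen_iff_mem_nhds.2 ?_
  rintro _ ⟨x, ⟨hxA, hxU⟩, rfl⟩
  have hcont : Continuous fun t : ℝ => ((t - l x) / l v) • v + x := by fun_prop
  have hU' : ∀ᶠ t in 𝓝 (l x), ((t - l x) / l v) • v + x ∈ U :=
    hcont.continuousAt.eventually (hU.mem_nhds (by simpa using hxU))
  filter_upwards [hU'] with t ht
  refine ⟨((t - l x) / l v) • v + x, ⟨?_, ht⟩, by simp [hv]⟩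
  exact AffineSubspace.vadd_mem_of_mem_direction (A.direction.smul_mem _ hvA) hxA

theorem image_eq_Ioo (h : IsRelOpenCell A C) {l : V →L[ℝ] ℝ}
    (hl : ¬ A.direction ≤ LinearMap.ker (l : V →ₗ[ℝ] ℝ)) : ∃ p q, p < q ∧ l '' C = Set.Ioo p q := by
  have hopen : IsOpen (l '' C) := h.isOpen_image hl
  have hbdd : Bornology.IsBounded (l '' C) := l.lipschitz.isBounded_image h.isBounded
  have hconn : IsConnected (l '' C) :=
    ⟨h.nonempty.image l, (h.convex.linear_image (l : V →ₗ[ℝ] ℝ)).isPreconnected⟩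
  have hIoo : l '' C = Set.Ioo (sInf (l '' C)) (sSup (l '' C)) := by
    refine Set.Subset.antisymm ?_ (hconn.Ioo_csInf_csSup_subset hbdd.bddBelow hbdd.bddAbove)
    rw [← interior_Icc]
    exact interior_maximal (subset_Icc_csInf_csSup hbdd.bddBelow hbdd.bddAbove) hopen
  exact ⟨_, _, Set.nonempty_Ioo.1 (hIoo ▸ hconn.nonempty), hIoo⟩

end IsRelOpenCell

theorem finrank_inf_ker_add_one {K W : Type*} [DivisionRing K] [AddCommGroup W] [Module K W]
    {D : Submodule K W} [FiniteDimensional K D] {l : W →ₗ[K] K} (hl : ¬ D ≤ LinearMap.ker l) :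
    Module.finrank K (D ⊓ LinearMap.ker l : Submodule K W) + 1 = Module.finrank K D := by
  have hne : l.domRestrict D ≠ 0 := fun h0 =>
    hl fun v hv => by simpa using LinearMap.congr_fun h0 ⟨v, hv⟩
  rw [← Module.Dual.finrank_ker_add_one_of_ne_zero hne, ← Submodule.map_comap_subtype,
    Submodule.finrank_map_subtype_eq]
  rfl

theorem mem_mk'_ker_iff {l : V →L[ℝ] ℝ} {x y : V} :
    y ∈ AffineSubspace.mk' x (LinearMap.ker (l : V →ₗ[ℝ] ℝ)) ↔ l y = l x := by
  simp [AffineSubspace.mem_mk', sub_eq_zero]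

variable {G ι : Type*} [AddCommGroup G]

-- The indicator is weighted by the sign of the nonempty slices of `C` by the level sets of `l`.
theorem IsRelOpenCell.exists_dropsOnlyAt_image [FiniteDimensional ℝ A.direction]
    (h : IsRelOpenCell A C) (l : V →L[ℝ] ℝ) (a : G) :
    ∃ p, DropsOnlyAt
      ((l '' C).indicator fun _ =>
        (-1 : ℤ) ^ Module.finrank ℝ
          (A.direction ⊓ LinearMap.ker (l : V →ₗ[ℝ] ℝ) : Submodule ℝ V) • a)
      p ((-1 : ℤ) ^ Module.finrank ℝ A.direction • a) := by
  by_cases hl : A.direction ≤ LinearMap.ker (l : V →ₗ[ℝ] ℝ)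
  · obtain ⟨p, hp⟩ := h.image_eq_singleton hl
    rw [hp, inf_eq_left.2 hl]
    exact ⟨p, dropsOnlyAt_indicator_singleton p _⟩
  · obtain ⟨p, q, hpq, hIoo⟩ := h.image_eq_Ioo hl
    rw [hIoo, ← finrank_inf_ker_add_one hl, pow_succ, mul_neg_one, neg_smul]
    exact ⟨p, dropsOnlyAt_indicator_Ioo hpq _⟩

theorem sum_indicator_inter_eq_zero {Y : Type*} {s : Finset ι} {a : ι → G} {D : ι → Set Y}
    (hsum : ∀ x, ∑ i ∈ s, (D i).indicator (fun _ => a i) x = 0) (Q : Set Y) (x : Y) :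
    ∑ i ∈ s with (D i ∩ Q).Nonempty, (D i ∩ Q).indicator (fun _ => a i) x = 0 := by
  rw [Finset.sum_filter_of_ne fun i _ hi => ⟨x, Set.mem_of_indicator_ne_zero hi⟩]
  by_cases hx : x ∈ Q
  · simpa [Set.indicator_apply, hx] using hsum x
  · simp [hx]

variable {s : Finset ι} {a : ι → G} {A : ι → AffineSubspace ℝ V} {C : ι → Set V}

theorem euler_relation_of_direction_eq_bot {H : AffineSubspace ℝ V} (hH : H.direction = ⊥)
    (hAH : ∀ i ∈ s, A i ≤ H) (hC : ∀ i ∈ s, IsRelOpenCell (A i) (C i))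
    (hsum : ∀ x, ∑ i ∈ s, (C i).indicator (fun _ => a i) x = 0) :
    ∑ i ∈ s, (-1 : ℤ) ^ Module.finrank ℝ (A i).direction • a i = 0 := by
  rcases s.eq_empty_or_nonempty with rfl | ⟨j, hj⟩
  · exact Finset.sum_empty
  obtain ⟨x, hx⟩ := (hC j hj).nonempty
  rw [← hsum x]
  refine Finset.sum_congr rfl fun i hi => ?_
  obtain ⟨y, hy⟩ := (hC i hi).nonempty
  have hyx : y = x := by
    have := AffineSubspace.vsub_mem_direction (hAH i hi ((hC i hi).subset hy))
      (hAH j hj ((hC j hj).subset hx))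
    simpa [hH, sub_eq_zero] using this
  have hdir : (A i).direction = ⊥ := by
    rw [eq_bot_iff, ← hH]
    exact AffineSubspace.direction_le (hAH i hi)
  rw [Set.indicator_of_mem (hyx ▸ hy), hdir, finrank_bot, pow_zero, one_smul]

theorem exists_mem_apply_eq {H : AffineSubspace ℝ V} {l : V →L[ℝ] ℝ} {v : V}
    (hH : (H : Set V).Nonempty) (hv : v ∈ H.direction) (hlv : l v ≠ 0) (t : ℝ) :
    ∃ x ∈ H, l x = t := by
  obtain ⟨x, hx⟩ := hH
  exact ⟨((t - l x) / l v) • v + x,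
    AffineSubspace.vadd_mem_of_mem_direction (H.direction.smul_mem _ hv) hx, by simp [hlv]⟩

theorem sum_indicator_image_eq_sum_slice (hC : ∀ i ∈ s, IsRelOpenCell (A i) (C i))
    (l : V →L[ℝ] ℝ) (x₀ : V) {P : AffineSubspace ℝ V}
    (hP : P = AffineSubspace.mk' x₀ (LinearMap.ker (l : V →ₗ[ℝ] ℝ))) :
    ∑ i ∈ s, (l '' C i).indicator (fun _ =>
        (-1 : ℤ) ^ Module.finrank ℝ
          ((A i).direction ⊓ LinearMap.ker (l : V →ₗ[ℝ] ℝ) : Submodule ℝ V) • a i) (l x₀) =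
      ∑ i ∈ s with (C i ∩ P).Nonempty,
        (-1 : ℤ) ^ Module.finrank ℝ (A i ⊓ P).direction • a i := by
  subst hP
  rw [Finset.sum_filter]
  refine Finset.sum_congr rfl fun i hi => ?_
  by_cases hne : (C i ∩ AffineSubspace.mk' x₀ (LinearMap.ker (l : V →ₗ[ℝ] ℝ))).Nonempty
  · obtain ⟨x, hxC, hxP⟩ := hne
    have hmem : l x₀ ∈ l '' C i := ⟨x, hxC, mem_mk'_ker_iff.1 hxP⟩
    rw [if_pos ⟨x, hxC, hxP⟩, Set.indicator_of_mem hmem,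
      AffineSubspace.direction_inf_of_mem ((hC i hi).subset hxC) hxP,
      AffineSubspace.direction_mk']
  · rw [if_neg hne, Set.indicator_of_notMem]
    rintro ⟨x, hxC, hx⟩
    exact hne ⟨x, hxC, mem_mk'_ker_iff.2 hx⟩

variable [FiniteDimensional ℝ V]

theorem euler_relation_of_le {H : AffineSubspace ℝ V} (hAH : ∀ i ∈ s, A i ≤ H)
    (hC : ∀ i ∈ s, IsRelOpenCell (A i) (C i))
    (hsum : ∀ x, ∑ i ∈ s, (C i).indicator (fun _ => a i) x = 0) :
    ∑ i ∈ s, (-1 : ℤ) ^ Module.finrank ℝ (A i).direction • a i = 0 := by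
  induction hn : Module.finrank ℝ H.direction generalizing H s A C with
  | zero =>
    exact euler_relation_of_direction_eq_bot (Submodule.finrank_eq_zero.1 hn) hAH hC hsum
  | succ n ih =>
    have hdir : H.direction ≠ ⊥ := fun h0 => by rw [h0, finrank_bot] at hn; omega
    obtain ⟨v, hv, hv0⟩ := Submodule.exists_mem_ne_zero_of_ne_bot hdir
    obtain ⟨l, hl⟩ := SeparatingDual.exists_ne_zero (R := ℝ) hv0
    have hker : ¬ H.direction ≤ LinearMap.ker (l : V →ₗ[ℝ] ℝ) := fun hle => hl (hle hv)
    have hHne : (H : Set V).Nonempty :=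
      H.nonempty_iff_ne_bot.2 fun h0 => hdir (h0 ▸ AffineSubspace.direction_bot ℝ V V)
    choose! p hp using fun i (hi : i ∈ s) => (hC i hi).exists_dropsOnlyAt_image l (a i)
    refine sum_eq_zero_of_dropsOnlyAt hp fun t => ?_
    obtain ⟨x₀, hx₀, rfl⟩ := exists_mem_apply_eq hHne hv hl t
    set P := AffineSubspace.mk' x₀ (LinearMap.ker (l : V →ₗ[ℝ] ℝ)) with hP
    have hslice_dim : Module.finrank ℝ (H ⊓ P).direction = n := by
      rw [AffineSubspace.direction_inf_of_mem hx₀ (AffineSubspace.self_mem_mk' _ _),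
        AffineSubspace.direction_mk']
      have := finrank_inf_ker_add_one hker
      omega
    rw [sum_indicator_image_eq_sum_slice hC l x₀ hP]
    refine ih (fun i hi => inf_le_inf_right P (hAH i (Finset.mem_of_mem_filter i hi)))
      (fun i hi => ?_) (sum_indicator_inter_eq_zero hsum P) hslice_dim
    obtain ⟨his, hne⟩ := Finset.mem_filter.1 hi
    exact (hC i his).inter_affineSubspace hne

theorem euler_relation (hC : ∀ i ∈ s, IsRelOpenCell (A i) (C i))
    (hsum : ∀ x, ∑ i ∈ s, (C i).indicator (fun _ => a i) x = 0) :
    ∑ i ∈ s, (-1 : ℤ) ^ Module.finrank ℝ (A i).direction • a i = 0 :=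
  euler_relation_of_le (fun _ _ => le_top) hC hsum

theorem IsRelOpenCell.sum_neg_one_pow_finrank_direction {B : AffineSubspace ℝ V} {D : Set V}
    (hD : IsRelOpenCell B D) (hC : ∀ i ∈ s, IsRelOpenCell (A i) (C i))
    (hdisj : (s : Set ι).PairwiseDisjoint C) (hunion : ⋃ i ∈ s, C i = D) :
    ∑ i ∈ s, (-1 : ℤ) ^ Module.finrank ℝ (A i).direction =
      (-1) ^ Module.finrank ℝ B.direction := by
  have hsum (x : V) : ∑ o ∈ Finset.insertNone s,
      (o.elim D C).indicator (fun _ => o.elim (-1 : ℤ) fun _ => 1) x = 0 := by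
    have h := congrFun (Finset.indicator_biUnion (f := fun _ => (1 : ℤ)) s C hdisj) x
    rw [hunion] at h
    calc _ = D.indicator (fun _ => (-1 : ℤ)) x + ∑ i ∈ s, (C i).indicator (fun _ => 1) x :=
          Finset.sum_insertNone _ _
      _ = 0 := by rw [← h]; by_cases hx : x ∈ D <;> simp [hx]
  have hrel := euler_relation (A := fun o : Option ι => o.elim B A)
    (C := fun o => o.elim D C) (by
      rintro (_ | i) hi
      · exact hD
      · exact hC i (Finset.some_mem_insertNone.1 hi)) hsum
  have h : (-1 : ℤ) ^ Module.finrank ℝ B.direction * -1 +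
      ∑ i ∈ s, (-1 : ℤ) ^ Module.finrank ℝ (A i).direction * 1 = 0 :=
    (Finset.sum_insertNone _ _).symm.trans hrel
  simp only [mul_neg_one, mul_one] at h
  exact (neg_add_eq_zero.1 h).symm

end RelOpenCell

section RelativeInterior

variable {V : Type*} [AddCommGroup V] [Module ℝ V] [TopologicalSpace V] {S : Set V} {x y z : V}

theorem mem_intrinsicInterior_iff_mem_nhdsWithin :
    x ∈ intrinsicInterior ℝ S ↔ x ∈ affineSpan ℝ S ∧ S ∈ 𝓝[affineSpan ℝ S] x := by
  constructor
  · rintro ⟨y, hy, rfl⟩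
    exact ⟨y.2, preimage_coe_mem_nhds_subtype.1 (mem_interior_iff_mem_nhds.1 hy)⟩
  · rintro ⟨hx, hS⟩
    exact ⟨⟨x, hx⟩, mem_interior_iff_mem_nhds.2 (preimage_coe_mem_nhds_subtype.2 hS), rfl⟩

theorem exists_isOpen_intrinsicInterior_eq_inter (S : Set V) :
    ∃ U, IsOpen U ∧ intrinsicInterior ℝ S = (affineSpan ℝ S : Set V) ∩ U := by
  obtain ⟨U, hU, hpre⟩ :=
    isOpen_induced_iff.1 (isOpen_interior (s := ((↑) ⁻¹' S : Set (affineSpan ℝ S))))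
  refine ⟨U, hU, ?_⟩
  rw [intrinsicInterior, ← hpre]
  exact Subtype.image_preimage_coe (affineSpan ℝ S : Set V) U

variable [IsTopologicalAddGroup V] [ContinuousSMul ℝ V]

-- A homothety centred at `z` maps a given point of the segment to `x`; its inverse carries `S` into
-- `S` by convexity, and a relative neighbourhood of `x` to one of the given point.
theorem openSegment_subset_intrinsicInterior (hS : Convex ℝ S) (hx : x ∈ intrinsicInterior ℝ S)
    (hz : z ∈ S) : openSegment ℝ x z ⊆ intrinsicInterior ℝ S := by
  rintro _ ⟨a, b, ha, hb, hab, rfl⟩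
  obtain rfl : b = 1 - a := by linarith
  obtain ⟨hxspan, hxnhds⟩ := mem_intrinsicInterior_iff_mem_nhdsWithin.1 hx
  have hzspan : z ∈ affineSpan ℝ S := subset_affineSpan ℝ S hz
  set y := a • x + (1 - a) • z with hy
  set φ := AffineMap.homothety z a⁻¹ with hφ
  have hyspan : y ∈ affineSpan ℝ S := by
    simpa [AffineMap.lineMap_apply_module, add_comm] using AffineMap.lineMap_mem a hzspan hxspan
  have hφy : φ y = x := by
    simp only [hφ, hy, AffineMap.homothety_apply, vsub_eq_sub, vadd_eq_add]
    match_scalars <;> field_simp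
    ring
  have hcombo (u : V) : a • φ u + (1 - a) • z = u := by
    simp only [hφ, AffineMap.homothety_apply, vsub_eq_sub, vadd_eq_add]
    match_scalars <;> field_simp
    ring
  have htend : Filter.Tendsto φ (𝓝[affineSpan ℝ S] y) (𝓝[affineSpan ℝ S] x) := by
    have := (AffineMap.homothety_continuous z a⁻¹).continuousWithinAt.tendsto_nhdsWithin
      (x := y) (s := affineSpan ℝ S) (t := affineSpan ℝ S)
      fun u hu => AffineMap.lineMap_mem _ hzspan hu
    rwa [← hφ, hφy] at this
  refine mem_intrinsicInterior_iff_mem_nhdsWithin.2 ⟨hyspan, ?_⟩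
  filter_upwards [htend hxnhds] with u hu
  exact hcombo u ▸ hS hu hz ha.le hb.le hab

theorem convex_intrinsicInterior (hS : Convex ℝ S) : Convex ℝ (intrinsicInterior ℝ S) :=
  convex_iff_openSegment_subset.2 fun _ hx _ hy =>
    openSegment_subset_intrinsicInterior hS hx (intrinsicInterior_subset hy)

theorem subset_closure_intrinsicInterior (hS : Convex ℝ S)
    (hne : (intrinsicInterior ℝ S).Nonempty) : S ⊆ closure (intrinsicInterior ℝ S) := by
  obtain ⟨x, hx⟩ := hne
  exact fun z hz => closure_mono (openSegment_subset_intrinsicInterior hS hx hz)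
    (segment_subset_closure_openSegment (right_mem_segment ℝ x z))

theorem exists_mem_openSegment_of_mem_intrinsicInterior (hx : x ∈ intrinsicInterior ℝ S)
    (hy : y ∈ S) : ∃ z ∈ S, x ∈ openSegment ℝ y z := by
  obtain ⟨hxspan, hxnhds⟩ := mem_intrinsicInterior_iff_mem_nhdsWithin.1 hx
  have htend : Filter.Tendsto (fun t : ℝ => AffineMap.lineMap y x t) (𝓝 1)
      (𝓝[affineSpan ℝ S] x) := by
    refine tendsto_nhdsWithin_iff.2 ⟨?_, Filter.Eventually.of_forall fun t =>
      AffineMap.lineMap_mem _ (subset_affineSpan ℝ S hy) hxspan⟩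
    have hcont : Continuous fun t : ℝ => AffineMap.lineMap y x t := AffineMap.lineMap_continuous
    simpa using hcont.tendsto 1
  have hmem : ∀ᶠ t : ℝ in 𝓝[>] 1, AffineMap.lineMap y x t ∈ S :=
    nhdsWithin_le_nhds (htend.eventually hxnhds)
  obtain ⟨t, htS, ht⟩ := (hmem.and self_mem_nhdsWithin).exists
  refine ⟨_, htS, ?_⟩
  have ht0 : 0 < t := zero_lt_one.trans ht
  rw [openSegment_eq_image_lineMap]
  refine ⟨t⁻¹, ⟨inv_pos.2 ht0, inv_lt_one_of_one_lt₀ ht⟩, ?_⟩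
  simp [AffineMap.lineMap_apply, ht0.ne']

end RelativeInterior

section SimplexInterior

variable {V : Type*} [NormedAddCommGroup V] [NormedSpace ℝ V] {σ τ : Finset V} {x : V}

/-- The open simplex spanned by the finite set `σ`: the relative interior of its convex hull. -/
def simplexInterior (σ : Finset V) : Set V :=
  intrinsicInterior ℝ (convexHull ℝ (σ : Set V))

theorem simplexInterior_subset_convexHull : simplexInterior σ ⊆ convexHull ℝ (σ : Set V) :=
  intrinsicInterior_subset

-- For each vertex `v` of `τ`, the point `x` lies strictly between `v` and some point of the
-- simplex, so its barycentric coordinate at `v` is positive.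
theorem subset_of_mem_simplexInterior_of_mem_convexHull
    (hτ : AffineIndependent ℝ ((↑) : τ → V)) (hστ : σ ⊆ τ) (hx : x ∈ simplexInterior τ)
    (hxσ : x ∈ convexHull ℝ (σ : Set V)) : τ ⊆ σ := by
  intro v hv
  obtain ⟨z, hz, a, b, ha, hb, hab, hxz⟩ :=
    exists_mem_openSegment_of_mem_intrinsicInterior hx (subset_convexHull ℝ _ hv)
  obtain ⟨u, hu0, hu1, hu⟩ := Finset.mem_convexHull'.1 hz
  obtain ⟨w, -, hw1, hw⟩ := Finset.mem_convexHull'.1 hxσ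
  have hcoord := hτ.eq_of_sum_eq_sum_subtype
    (w₁ := fun y => (if y = v then a else 0) + b * u y) (w₂ := fun y => if y ∈ σ then w y else 0)
    (by simp [Finset.sum_add_distrib, ← Finset.mul_sum, Finset.inter_eq_right.2 hστ, *])
    (by simp [add_smul, ite_smul, mul_smul, Finset.sum_add_distrib, ← Finset.smul_sum,
      Finset.inter_eq_right.2 hστ, *])
    v hv
  by_contra hvσ
  have hpos : 0 < a + b * u v := add_pos_of_pos_of_nonneg ha (mul_nonneg hb.le (hu0 v hv))
  exact hpos.ne' (by simpa [hvσ] using hcoord)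

theorem face_subset_of_mem_simplexInterior {L : SimplicialComplex ℝ V} (hτ : τ ∈ L.faces)
    (hσ : σ ∈ L.faces) (hxτ : x ∈ simplexInterior τ) (hxσ : x ∈ convexHull ℝ (σ : Set V)) :
    τ ⊆ σ := by
  have hxinter : x ∈ convexHull ℝ ((τ ∩ σ : Finset V) : Set V) := by
    rw [Finset.coe_inter]
    exact L.inter_subset_convexHull hτ hσ ⟨simplexInterior_subset_convexHull hxτ, hxσ⟩
  exact (subset_of_mem_simplexInterior_of_mem_convexHull (L.indep hτ) Finset.inter_subset_left hxτ
    hxinter).trans Finset.inter_subset_right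

theorem face_eq_of_mem_simplexInterior {L : SimplicialComplex ℝ V} (hτ : τ ∈ L.faces)
    (hσ : σ ∈ L.faces) (hxτ : x ∈ simplexInterior τ) (hxσ : x ∈ simplexInterior σ) : τ = σ :=
  (face_subset_of_mem_simplexInterior hτ hσ hxτ (simplexInterior_subset_convexHull hxσ)).antisymm
    (face_subset_of_mem_simplexInterior hσ hτ hxσ (simplexInterior_subset_convexHull hxτ))

theorem neg_one_pow_finrank_direction_affineSpan (hσ : AffineIndependent ℝ ((↑) : σ → V))
    (hne : σ.Nonempty) :
    (-1 : ℤ) ^ Module.finrank ℝ (affineSpan ℝ (σ : Set V)).direction = -(-1) ^ σ.card := by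
  have : Nonempty σ := hne.to_subtype
  have hdim : Module.finrank ℝ (affineSpan ℝ (σ : Set V)).direction + 1 = σ.card := by
    have hrange : vectorSpan ℝ (Set.range ((↑) : σ → V)) = vectorSpan ℝ (σ : Set V) :=
      congrArg _ Subtype.range_coe
    rw [direction_affineSpan, ← hrange, hσ.finrank_vectorSpan_add_one, Fintype.card_coe]
  rw [← hdim, pow_succ, mul_neg_one, neg_neg]

variable [FiniteDimensional ℝ V]

theorem simplexInterior_nonempty (hσ : σ.Nonempty) : (simplexInterior σ).Nonempty :=
  Set.Nonempty.intrinsicInterior (convex_convexHull ℝ _) (convexHull_nonempty_iff.2 hσ)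

theorem convexHull_subset_closure_simplexInterior (σ : Finset V) :
    convexHull ℝ (σ : Set V) ⊆ closure (simplexInterior σ) := by
  rcases σ.eq_empty_or_nonempty with rfl | hσ
  · simp
  · exact subset_closure_intrinsicInterior (convex_convexHull ℝ _) (simplexInterior_nonempty hσ)

theorem isRelOpenCell_simplexInterior (hσ : σ.Nonempty) :
    IsRelOpenCell (affineSpan ℝ (σ : Set V)) (simplexInterior σ) where
  nonempty := simplexInterior_nonempty hσ
  convex := convex_intrinsicInterior (convex_convexHull ℝ _)
  isBounded := (isBounded_convexHull.2 σ.finite_toSet.isBounded).subset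
    simplexInterior_subset_convexHull
  exists_isOpen := by
    simpa only [affineSpan_convexHull, simplexInterior] using
      exists_isOpen_intrinsicInterior_eq_inter (convexHull ℝ (σ : Set V))

theorem card_le_card_of_simplexInterior_subset (hτ : AffineIndependent ℝ ((↑) : τ → V))
    (h : simplexInterior τ ⊆ simplexInterior σ) : τ.card ≤ σ.card := by
  refine hτ.card_le_card_of_subset_affineSpan ?_
  have hclosed : IsClosed (affineSpan ℝ (σ : Set V) : Set V) :=
    AffineSubspace.closed_of_finiteDimensional _
  calc (τ : Set V) ⊆ closure (simplexInterior τ) :=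
        (subset_convexHull ℝ _).trans (convexHull_subset_closure_simplexInterior τ)
    _ ⊆ affineSpan ℝ (σ : Set V) := closure_minimal
        (h.trans (simplexInterior_subset_convexHull.trans (convexHull_subset_affineSpan _))) hclosed

theorem sum_smul_mem_simplexInterior {w : V → ℝ} (hw : ∀ v ∈ σ, 0 < w v)
    (hw1 : ∑ v ∈ σ, w v = 1) : ∑ v ∈ σ, w v • v ∈ simplexInterior σ := by
  have hσ : σ.Nonempty := Finset.nonempty_of_sum_ne_zero (hw1 ▸ one_ne_zero)
  obtain ⟨c, hc⟩ := simplexInterior_nonempty hσ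
  obtain ⟨u, -, hu1, huc⟩ := Finset.mem_convexHull'.1 (simplexInterior_subset_convexHull hc)
  have hsmall : ∀ᶠ a : ℝ in 𝓝[>] 0, ∀ v ∈ σ, a * u v < w v := by
    refine (Filter.eventually_all_finset σ).2 fun v hv => nhdsWithin_le_nhds ?_
    have hcont : Continuous fun a : ℝ => a * u v := by fun_prop
    exact hcont.continuousAt.eventually_lt_const (by simpa using hw v hv)
  obtain ⟨a, hau, ha0, ha1⟩ := (hsmall.and (Ioo_mem_nhdsGT zero_lt_one)).exists
  have hb : 0 < 1 - a := sub_pos.2 ha1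
  have hz : ∑ v ∈ σ, ((w v - a * u v) / (1 - a)) • v ∈ convexHull ℝ (σ : Set V) := by
    refine Finset.mem_convexHull'.2 ⟨_, fun v hv => (div_pos (sub_pos.2 (hau v hv)) hb).le, ?_, rfl⟩
    rw [← Finset.sum_div, Finset.sum_sub_distrib, ← Finset.mul_sum, hw1, hu1, mul_one,
      div_self hb.ne']
  refine openSegment_subset_intrinsicInterior (convex_convexHull ℝ _) hc hz
    ⟨a, 1 - a, ha0, hb, add_sub_cancel _ _, ?_⟩
  rw [← huc, Finset.smul_sum, Finset.smul_sum, ← Finset.sum_add_distrib]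
  refine Finset.sum_congr rfl fun v _ => ?_
  match_scalars
  field_simp
  ring

theorem exists_subset_mem_simplexInterior (hx : x ∈ convexHull ℝ (σ : Set V)) :
    ∃ τ ⊆ σ, τ.Nonempty ∧ x ∈ simplexInterior τ := by
  obtain ⟨w, hw0, hw1, rfl⟩ := Finset.mem_convexHull'.1 hx
  have hpos : ∀ v ∈ σ.filter (w · ≠ 0), 0 < w v := fun v hv =>
    (hw0 v (Finset.mem_of_mem_filter v hv)).lt_of_ne' (Finset.mem_filter.1 hv).2
  have hsum1 : ∑ v ∈ σ with w v ≠ 0, w v = 1 := (Finset.sum_filter_ne_zero σ).trans hw1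
  refine ⟨σ.filter (w · ≠ 0), Finset.filter_subset _ _,
    Finset.nonempty_of_sum_ne_zero (hsum1 ▸ one_ne_zero), ?_⟩
  have hmem := sum_smul_mem_simplexInterior hpos hsum1
  rwa [Finset.sum_filter_of_ne fun v _ hv => left_ne_zero_of_smul hv] at hmem

end SimplexInterior

section Star

variable {V : Type*} [NormedAddCommGroup V] [NormedSpace ℝ V] {K L : SimplicialComplex ℝ V}
  {τ ζ α : Finset V} {x : V} {ε : ℝ}

/-- The faces of `L` that contain `τ` and whose open simplices lie in the open simplex of `α`:
the part of the open star of `τ` that subdivides `α`. -/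
def starIn (L : SimplicialComplex ℝ V) (τ α : Finset V) : Set (Finset V) :=
  {η | η ∈ L.faces ∧ simplexInterior η ⊆ simplexInterior α ∧ τ ⊆ η}

theorem finite_starIn (hL : LocallyFinite fun σ : L.faces => convexHull ℝ (σ : Set V))
    (hτ : τ.Nonempty) (α : Finset V) : (starIn L τ α).Finite := by
  obtain ⟨v, hv⟩ := hτ
  refine ((hL.point_finite v).image Subtype.val).subset fun η hη => ?_
  exact ⟨⟨η, hη.1⟩, subset_convexHull ℝ _ (hη.2.2 hv), rfl⟩

theorem exists_ball_mem_convexHull_imp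
    (hL : LocallyFinite fun σ : L.faces => convexHull ℝ (σ : Set V)) (x : V) :
    ∃ ε > 0, ∀ y ∈ Metric.ball x ε, ∀ σ ∈ L.faces, y ∈ convexHull ℝ (σ : Set V) →
      x ∈ convexHull ℝ (σ : Set V) := by
  have hclosed (σ : L.faces) : IsClosed (convexHull ℝ (σ : Set V)) :=
    ((σ : Finset V).finite_toSet.isCompact_convexHull ℝ).isClosed
  obtain ⟨ε, hε, hball⟩ := Metric.eventually_nhds_iff_ball.1 (hL.eventually_subset hclosed x)
  exact ⟨ε, hε, fun y hy σ hσ hyσ => @hball y hy ⟨σ, hσ⟩ hyσ⟩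

variable [FiniteDimensional ℝ V]

theorem isRelOpenCell_simplexInterior_inter_ball {σ : Finset V} (hx : x ∈ convexHull ℝ (σ : Set V))
    (hε : 0 < ε) :
    IsRelOpenCell (affineSpan ℝ (σ : Set V)) (simplexInterior σ ∩ Metric.ball x ε) := by
  have hσ : σ.Nonempty := convexHull_nonempty_iff.1 ⟨x, hx⟩
  refine (isRelOpenCell_simplexInterior hσ).inter_isOpen Metric.isOpen_ball (convex_ball x ε) ?_
  rw [Set.inter_comm]
  exact mem_closure_iff_nhds.1 (convexHull_subset_closure_simplexInterior σ hx) _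
    (Metric.ball_mem_nhds x hε)

theorem iUnion_starIn_inter_ball (hspace : K.space ⊆ L.space)
    (hsub : ∀ σ ∈ L.faces, ∃ β ∈ K.faces, simplexInterior σ ⊆ simplexInterior β)
    (hτ : τ ∈ L.faces) (hα : α ∈ K.faces) (hx : x ∈ simplexInterior τ)
    (hball : ∀ y ∈ Metric.ball x ε, ∀ σ ∈ L.faces, y ∈ convexHull ℝ (σ : Set V) →
      x ∈ convexHull ℝ (σ : Set V)) :
    ⋃ η ∈ starIn L τ α, simplexInterior η ∩ Metric.ball x ε =
      simplexInterior α ∩ Metric.ball x ε := by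
  refine Set.Subset.antisymm
    (Set.iUnion₂_subset fun η hη => Set.inter_subset_inter_left _ hη.2.1) ?_
  rintro y ⟨hyα, hyball⟩
  have hyL : y ∈ L.space :=
    hspace (SimplicialComplex.convexHull_subset_space hα (simplexInterior_subset_convexHull hyα))
  obtain ⟨σ, hσ, hyσ⟩ := SimplicialComplex.mem_space_iff.1 hyL
  obtain ⟨η, hησ, hηne, hyη⟩ := exists_subset_mem_simplexInterior hyσ
  have hη : η ∈ L.faces := L.down_closed hσ hησ hηne
  have hτη : τ ⊆ η := face_subset_of_mem_simplexInterior hτ hη hx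
    (hball y hyball η hη (simplexInterior_subset_convexHull hyη))
  obtain ⟨β, hβ, hηβ⟩ := hsub η hη
  obtain rfl : β = α := face_eq_of_mem_simplexInterior hβ hα (hηβ hyη) hyα
  exact Set.mem_biUnion ⟨hη, hηβ, hτη⟩ ⟨hyη, hyball⟩

theorem sum_starIn_neg_one_pow_card
    (hL : LocallyFinite fun σ : L.faces => convexHull ℝ (σ : Set V)) (hspace : K.space ⊆ L.space)
    (hsub : ∀ σ ∈ L.faces, ∃ β ∈ K.faces, simplexInterior σ ⊆ simplexInterior β)
    (hτ : τ ∈ L.faces) (hα : α ∈ K.faces) (hx : x ∈ simplexInterior τ)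
    (hxα : x ∈ convexHull ℝ (α : Set V)) {S : Finset (Finset V)}
    (hS : (S : Set (Finset V)) = starIn L τ α) :
    ∑ η ∈ S, (-1 : ℤ) ^ η.card = (-1) ^ α.card := by
  have hmem (η) (hη : η ∈ S) : η ∈ starIn L τ α := hS ▸ Finset.mem_coe.2 hη
  obtain ⟨ε, hε, hball⟩ := exists_ball_mem_convexHull_imp hL x
  have hcell : ∀ η ∈ S,
      IsRelOpenCell (affineSpan ℝ (η : Set V)) (simplexInterior η ∩ Metric.ball x ε) :=
    fun η hη => isRelOpenCell_simplexInterior_inter_ball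
      (convexHull_mono (hmem η hη).2.2 (simplexInterior_subset_convexHull hx)) hε
  have hdisj : (S : Set (Finset V)).PairwiseDisjoint
      fun η => simplexInterior η ∩ Metric.ball x ε := fun η hη θ hθ hne =>
    Set.disjoint_left.2 fun y hyη hyθ => hne
      (face_eq_of_mem_simplexInterior (hmem η hη).1 (hmem θ hθ).1 hyη.1 hyθ.1)
  have hunion : ⋃ η ∈ S, simplexInterior η ∩ Metric.ball x ε =
      simplexInterior α ∩ Metric.ball x ε := by
    rw [← iUnion_starIn_inter_ball hspace hsub hτ hα hx hball, ← hS]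
    rfl
  have hpartition := (isRelOpenCell_simplexInterior_inter_ball hxα
    hε).sum_neg_one_pow_finrank_direction hcell hdisj hunion
  rwa [neg_one_pow_finrank_direction_affineSpan (K.indep hα)
      (SimplicialComplex.nonempty_of_mem_faces hα),
    Finset.sum_congr rfl fun η hη => neg_one_pow_finrank_direction_affineSpan
      (L.indep (hmem η hη).1) (SimplicialComplex.nonempty_of_mem_faces (hmem η hη).1),
    Finset.sum_neg_distrib, neg_inj] at hpartition

end Star

theorem sum_mul_ncard_fiber {X κ R : Type*} [CommSemiring R] {S : Set X} (hS : S.Finite)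
    {T : Finset κ} {d : X → κ} (hd : ∀ x ∈ S, d x ∈ T) (f : κ → R) :
    ∑ k ∈ T, f k * ({x | x ∈ S ∧ d x = k}.ncard : R) = ∑ x ∈ hS.toFinset, f (d x) := by
  rw [← Finset.sum_fiberwise_of_maps_to' fun x hx => hd x (hS.mem_toFinset.1 hx)]
  refine Finset.sum_congr rfl fun k _ => ?_
  have hfiber : {x | x ∈ S ∧ d x = k} = (hS.toFinset.filter (d · = k) : Finset X) := by
    ext x
    simp
  rw [hfiber, Set.ncard_coe_finset, Finset.sum_const, nsmul_eq_mul, mul_comm]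

theorem neg_one_pow_tsub {R : Type*} [Monoid R] [HasDistribNeg R] {m n : ℕ} (h : m ≤ n) :
    (-1 : R) ^ (n - m) = (-1) ^ m * (-1) ^ n := by
  obtain ⟨k, rfl⟩ := Nat.exists_eq_add_of_le h
  rw [Nat.add_sub_cancel_left, pow_add, ← mul_assoc, ← pow_add, Even.neg_one_pow ⟨m, rfl⟩, one_mul]

theorem sum_neg_one_pow_mul_ncard_card_eq {X : Type*} {S : Set (Finset X)} (hS : S.Finite)
    {s r : ℕ} (hcard : ∀ η ∈ S, s + 1 < η.card ∧ η.card ≤ r + 1) :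
    ∑ i ∈ Finset.Icc (s + 1) r,
        (-1 : ℤ) ^ (i - s) * ({η | η ∈ S ∧ η.card = i + 1}.ncard : ℤ) =
      (-1) ^ (s + 1) * ∑ η ∈ hS.toFinset, (-1) ^ η.card := by
  calc _ = ∑ i ∈ Finset.Icc (s + 1) r,
          (-1 : ℤ) ^ (i - s) * ({η | η ∈ S ∧ η.card - 1 = i}.ncard : ℤ) := by
        refine Finset.sum_congr rfl fun i hi => ?_
        have := Finset.mem_Icc.1 hi
        simp only [show ∀ m : ℕ, m - 1 = i ↔ m = i + 1 by omega]
    _ = ∑ η ∈ hS.toFinset, (-1 : ℤ) ^ (η.card - 1 - s) :=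
        sum_mul_ncard_fiber hS (fun η hη => Finset.mem_Icc.2 (by have := hcard η hη; omega)) _
    _ = _ := by
        rw [Finset.mul_sum]
        refine Finset.sum_congr rfl fun η hη => ?_
        have := hcard η (hS.mem_toFinset.1 hη)
        rw [← neg_one_pow_tsub (by omega), add_comm s, Nat.sub_sub]

theorem subdivision_sign_sum_general {V : Type*} [NormedAddCommGroup V] [NormedSpace ℝ V]
    [FiniteDimensional ℝ V] {s r : ℕ} {K L : SimplicialComplex ℝ V}
    (hL : LocallyFinite fun σ : L.faces => convexHull ℝ (σ : Set V)) (hspace : K.space ⊆ L.space)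
    (hsub : ∀ σ ∈ L.faces, ∃ β ∈ K.faces, simplexInterior σ ⊆ simplexInterior β)
    {τ ζ α : Finset V} (hτ : τ ∈ L.faces) (hζ : ζ ∈ K.faces) (hα : α ∈ K.faces)
    (hτcard : τ.card = s + 1) (hαcard : α.card = r + 1)
    (hcont : simplexInterior τ ⊆ simplexInterior ζ) (hface : ζ ⊂ α) :
    ∑ i ∈ Finset.Icc (s + 1) r, (-1 : ℤ) ^ (i - s) *
        ({η : Finset V | η ∈ L.faces ∧ η.card = i + 1 ∧
          simplexInterior η ⊆ simplexInterior α ∧ τ ⊆ η}.ncard : ℤ) =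
      (-1 : ℤ) ^ (r - s) := by
  obtain ⟨x, hx⟩ := simplexInterior_nonempty (SimplicialComplex.nonempty_of_mem_faces hτ)
  have hxα : x ∈ convexHull ℝ (α : Set V) :=
    convexHull_mono hface.subset (simplexInterior_subset_convexHull (hcont hx))
  have hτα : ¬ simplexInterior τ ⊆ simplexInterior α := fun h =>
    hface.ne (face_eq_of_mem_simplexInterior hζ hα (hcont hx) (h hx))
  have hsr : s + 1 ≤ r + 1 :=
    calc s + 1 = τ.card := hτcard.symm
      _ ≤ ζ.card := card_le_card_of_simplexInterior_subset (L.indep hτ) hcont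
      _ ≤ r + 1 := hαcard ▸ Finset.card_le_card hface.subset
  have hcard : ∀ η ∈ starIn L τ α, s + 1 < η.card ∧ η.card ≤ r + 1 := fun η hη =>
    ⟨hτcard ▸ Finset.card_lt_card (hη.2.2.ssubset_of_ne fun h => hτα (h ▸ hη.2.1)),
      hαcard ▸ card_le_card_of_simplexInterior_subset (L.indep hη.1) hη.2.1⟩
  have hstar (i : ℕ) : {η : Finset V | η ∈ L.faces ∧ η.card = i + 1 ∧
      simplexInterior η ⊆ simplexInterior α ∧ τ ⊆ η} = {η | η ∈ starIn L τ α ∧ η.card = i + 1} :=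
    Set.ext fun η => ⟨fun h => ⟨⟨h.1, h.2.2⟩, h.2.1⟩, fun h => ⟨h.1.1, h.2, h.1.2⟩⟩
  have hfin : (starIn L τ α).Finite :=
    finite_starIn hL (SimplicialComplex.nonempty_of_mem_faces hτ) α
  simp only [hstar]
  rw [sum_neg_one_pow_mul_ncard_card_eq hfin hcard,
    sum_starIn_neg_one_pow_card hL hspace hsub hτ hα hx hxα hfin.coe_toFinset, hαcard,
    ← neg_one_pow_tsub hsr, Nat.add_sub_add_right]

/-- If `L` is a subdivision of the finite `n`-dimensional complex `K`, `τ` is an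
`s`-simplex of `L` whose open simplex is contained in the open `p`-simplex `ζ`
of `K`, and `α` is an `r`-simplex of `K` having `ζ` as a proper face
(`p+1 ≤ r ≤ n`), then
`Σ_{i=s+1}^{r} (-1)^{i-s} #{η^i ∈ L | η open ⊆ α open, τ ≺ η^i} = (-1)^{r-s}`. -/
theorem subdivision_sign_sum {N n s p r : ℕ}
    (K L : SimplicialComplex ℝ (Euc N))
    (hKfin : K.faces.Finite) (hLfin : L.faces.Finite) (hdim : IsNDim n K)
    (hsub : IsSubdivision K L)
    (τ ζ α : Finset (Euc N)) (hτ : τ ∈ L.faces) (hζ : ζ ∈ K.faces)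
    (hα : α ∈ K.faces)
    (hτcard : τ.card = s + 1) (hζcard : ζ.card = p + 1) (hαcard : α.card = r + 1)
    (hcont : openSimplex τ ⊆ openSimplex ζ)
    (hface : ζ ⊆ α) (hpr : p + 1 ≤ r) (hrn : r ≤ n) :
    ∑ i ∈ Finset.Icc (s + 1) r, (-1 : ℤ) ^ (i - s) *
        ({η : Finset (Euc N) | η ∈ L.faces ∧ η.card = i + 1 ∧
          openSimplex η ⊆ openSimplex α ∧ τ ⊆ η}.ncard : ℤ) =
      (-1 : ℤ) ^ (r - s) := by
  have : Finite L.faces := hLfin.to_subtype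
  have hζα : ζ ⊂ α := hface.ssubset_of_ne fun h => by rw [h] at hζcard; omega
  exact subdivision_sign_sum_general (locallyFinite_of_finite _) hsub.1.ge hsub.2 hτ hζ hα
    hτcard hαcard hcont hζα

end AngleDefectPaper
end
end

section
/- Let K be a finite n-dimensional simplicial complex embedded in Euclidean space, with n ≥ 2, and suppose that each (n−1)-simplex of K is a face of precisely two n-simplices of K. Then the stratified Euler characteristic of K equals its combinatorial Euler characteristic: χ^s(K) = χ(K). -/
open Filter MeasureTheory Geometry
open scoped BigOperators

noncomputable section

attribute [local instance 0] Classical.propDecidable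

namespace AngleDefectPaper

variable {N : ℕ}

/-!
Every rank `r(η)` equals `1`, so `χˢ(K)` counts each simplex with its sign. It suffices that no
point of `|K|` lies in `C_r(K)` for `r ≠ 2`. A neighborhood homeomorphic to `T_r × ℝ^{n-1}` contains
the apex set `{cone point} × ℝ^{n-1}`, whose dimension prevents it from lying in the
`(n-2)`-skeleton of `K`; hence some apex point `y` has a carrier of dimension at least `n - 1`.
Since every `(n-1)`-simplex lies in exactly two `n`-simplices, `|K|` looks like `ℝⁿ` near `y`, and
invariance of domain excludes `r ≠ 2`: for `r ≤ 1` the cone embeds into a half-space with `y` on the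
boundary, while for `r ≥ 3` two of the legs form an `ℝⁿ` through `y` that is not a neighborhood
of `y`.

Invariance of domain is deduced from Brouwer's fixed point theorem by Kulpa's argument, and
Brouwer's theorem from the Milnor–Rogers argument: if `f` is a `C¹` retraction of the ball onto the
sphere, then the volume of the image of the ball under `id + t (f - id)` is a polynomial in `t`
which is constant for small `t` and vanishes at `t = 1`.
-/

section DeterminantIntegral

open Set Metric Module Polynomial
open scoped NNReal Topology

variable {E : Type*} [NormedAddCommGroup E] [NormedSpace ℝ E]

lemma exists_polynomial_eval_eq_det_id_add_smul [FiniteDimensional ℝ E] (A : E →L[ℝ] E) :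
    ∃ p : ℝ[X], p.natDegree ≤ finrank ℝ E ∧
      ∀ t : ℝ, p.eval t = (ContinuousLinearMap.id ℝ E + t • A).det := by
  let b := finBasis ℝ E
  let M := LinearMap.toMatrix b b (A : E →ₗ[ℝ] E)
  refine ⟨(-M).charpolyRev, ?_, fun t => ?_⟩
  · rw [← Matrix.reverse_charpoly]
    exact (reverse_natDegree_le _).trans (by simp [Matrix.charpoly_natDegree_eq_dim])
  · have hM : LinearMap.toMatrix b b ((ContinuousLinearMap.id ℝ E + t • A : E →L[ℝ] E) : E →ₗ[ℝ] E)
        = 1 + t • M := by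
      rw [ContinuousLinearMap.toLinearMap_add, map_add, ContinuousLinearMap.toLinearMap_smul,
        map_smul, ContinuousLinearMap.coe_id, LinearMap.toMatrix_id]
    rw [ContinuousLinearMap.det, ← LinearMap.det_toMatrix b, hM, Matrix.charpolyRev,
      ← coe_evalRingHom, RingHom.map_det]
    congr 1
    ext i j
    by_cases hij : i = j <;> simp [hij, mul_comm t]

lemma integral_eval_eq_of_infinite {α : Type*} [MeasurableSpace α] {μ : Measure α} {P : α → ℝ[X]}
    {d : ℕ} (hd : ∀ x, (P x).natDegree ≤ d) {T : Set ℝ} (hT : T.Infinite) {c : ℝ}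
    (hint : ∀ t ∈ T, Integrable (fun x => (P x).eval t) μ)
    (hc : ∀ t ∈ T, ∫ x, (P x).eval t ∂μ = c) (t : ℝ) :
    ∫ x, (P x).eval t ∂μ = c := by
  obtain ⟨s, hsT, hs⟩ := hT.exists_subset_card_eq (d + 1)
  have interpolate (p : ℝ[X]) (hp : p.natDegree ≤ d) :
      p.eval t = ∑ i ∈ s, (Lagrange.basis s id i).eval t * p.eval i := by
    have hdeg : p.degree < s.card :=
      degree_le_natDegree.trans_lt (by rw [hs]; exact_mod_cast Nat.lt_succ_of_le hp)
    conv_lhs => rw [Lagrange.eq_interpolate (v := id) Function.injective_id.injOn hdeg]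
    simp [Lagrange.interpolate_apply, eval_finsetSum, mul_comm]
  calc ∫ x, (P x).eval t ∂μ
      = ∫ x, ∑ i ∈ s, (Lagrange.basis s id i).eval t * (P x).eval i ∂μ :=
        integral_congr_ae (.of_forall fun x => interpolate (P x) (hd x))
    _ = ∑ i ∈ s, (Lagrange.basis s id i).eval t * c := by
        rw [integral_finsetSum _ fun i hi => (hint i (hsT hi)).const_mul _]
        exact Finset.sum_congr rfl fun i hi => by rw [integral_const_mul, hc i (hsT hi)]
    _ = c := by simpa using (interpolate (C c) (by simp)).symm

lemma det_id_add_pos [FiniteDimensional ℝ E] {A : E →L[ℝ] E} (hA : ‖A‖ < 1) :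
    0 < (ContinuousLinearMap.id ℝ E + A).det := by
  have : CompleteSpace E := FiniteDimensional.complete ℝ E
  let f : ℝ → ℝ := fun s => (ContinuousLinearMap.id ℝ E + s • A).det
  have hf : Continuous f := ContinuousLinearMap.continuous_det.comp (by fun_prop)
  have hf_ne (s : ℝ) (hs : s ∈ Icc (0 : ℝ) 1) : f s ≠ 0 := by
    have hsA : ‖-(s • A)‖ < 1 := by
      rw [norm_neg, norm_smul, Real.norm_of_nonneg hs.1]
      exact (mul_le_of_le_one_left (norm_nonneg A) hs.2).trans_lt hA
    have hunit : IsUnit (1 - -(s • A)) := isUnit_one_sub_of_norm_lt_one hsA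
    rw [sub_neg_eq_add] at hunit
    exact ((hunit.map (ContinuousLinearMap.toLinearMapRingHom (R₁ := ℝ) (M₁ := E))).map
      LinearMap.det).ne_zero
  have hf0 : f 0 = 1 := by
    simp only [f, zero_smul, add_zero]
    exact LinearMap.det_id
  have hf1 : 0 < f 1 := by
    by_contra! hneg
    obtain ⟨s, hs, hs0⟩ := intermediate_value_Icc' zero_le_one hf.continuousOn
      (show (0 : ℝ) ∈ Icc (f 1) (f 0) from ⟨hneg, by rw [hf0]; exact zero_le_one⟩)
    exact hf_ne s hs hs0
  simpa [f] using hf1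

lemma inter_frontier_nonempty_of_isPreconnected {X : Type*} [TopologicalSpace X] {s t : Set X}
    (ht : IsPreconnected t) (hs : (t ∩ s).Nonempty) (hsc : (t ∩ sᶜ).Nonempty) :
    (t ∩ frontier s).Nonempty := by
  rw [frontier_eq_closure_inter_closure]
  refine isPreconnected_closed_iff.1 ht _ _ isClosed_closure isClosed_closure (fun x _ => ?_)
    (hs.mono (inter_subset_inter_right t subset_closure))
    (hsc.mono (inter_subset_inter_right t subset_closure))
  exact (em (x ∈ s)).imp (subset_closure ·) (subset_closure ·)

lemma lipschitzWith_indicator {F : Type*} [NormedAddCommGroup F] {s : Set E} {g : E → F} {C : ℝ≥0}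
    (hs : IsClosed s) (hg : LipschitzOnWith C g s) (h0 : ∀ x ∈ frontier s, g x = 0) :
    LipschitzWith C (s.indicator g) := by
  have across {x y : E} (hx : x ∈ s) (hy : y ∉ s) : dist (g x) 0 ≤ C * dist x y := by
    obtain ⟨z, hz, hzs⟩ := inter_frontier_nonempty_of_isPreconnected
      (convex_segment (𝕜 := ℝ) x y).isPreconnected ⟨x, left_mem_segment ℝ x y, hx⟩
      ⟨y, right_mem_segment ℝ x y, hy⟩
    have hxz := hg.dist_le_mul x hx z (hs.frontier_subset hzs)
    rw [h0 z hzs] at hxz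
    have := dist_add_dist_of_mem_segment hz
    exact hxz.trans (by gcongr; linarith [dist_nonneg (x := z) (y := y)])
  refine LipschitzWith.of_dist_le_mul fun x y => ?_
  by_cases hx : x ∈ s <;> by_cases hy : y ∈ s
  · simpa [hx, hy] using hg.dist_le_mul x hx y hy
  · simpa [hx, hy] using across hx hy
  · simpa [hx, hy, dist_comm] using across hy hx
  · simp only [indicator_of_notMem, hx, hy, not_false_eq_true, dist_self]
    positivity

lemma bijective_id_add_of_lipschitzWith {G : Type*} [NormedAddCommGroup G] [CompleteSpace G]
    {g : G → G} {C : ℝ≥0} (hC : C < 1) (hg : LipschitzWith C g) :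
    Function.Bijective fun x => x + g x := by
  have contracting (y : G) : ContractingWith C fun x => y - g x :=
    ⟨hC, .of_dist_le_mul fun a b => by
      simpa only [dist_sub_left] using hg.dist_le_mul a b⟩
  refine Function.bijective_iff_existsUnique _ |>.2 fun y =>
    ⟨(contracting y).fixedPoint, ?_, fun x hx => (contracting y).fixedPoint_unique ?_⟩
  · exact eq_sub_iff_add_eq.1 (contracting y).fixedPoint_isFixedPt.eq.symm
  · exact (eq_sub_of_add_eq hx).symm

variable [FiniteDimensional ℝ E] [MeasurableSpace E] [BorelSpace E]
  (μ : Measure E) [μ.IsAddHaarMeasure]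

lemma setIntegral_det_id_add_of_lipschitzOnWith {g : E → E} {g' : E → E →L[ℝ] E} {K : Set E}
    {C : ℝ≥0} (hK : IsClosed K) (hC : C < 1) (hg : LipschitzOnWith C g K)
    (hg' : ∀ x ∈ K, HasFDerivWithinAt g (g' x) K x) (hnorm : ∀ x ∈ K, ‖g' x‖ < 1)
    (h0 : ∀ x ∈ frontier K, g x = 0) :
    ∫ x in K, (ContinuousLinearMap.id ℝ E + g' x).det ∂μ = μ.real K := by
  have : CompleteSpace E := FiniteDimensional.complete ℝ E
  let Φ : E → E := fun x => x + K.indicator g x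
  have hbij : Function.Bijective Φ :=
    bijective_id_add_of_lipschitzWith hC (lipschitzWith_indicator hK hg h0)
  have hΦ_in {x : E} (hx : x ∈ K) : Φ x = x + g x := by simp [Φ, hx]
  have hΦ_out {x : E} (hx : x ∉ K) : Φ x = x := by simp [Φ, hx]
  have himage : Φ '' K = K := by
    refine Subset.antisymm ?_ fun y hy => ?_
    · rintro _ ⟨x, hx, rfl⟩
      by_contra hΦx
      exact hΦx (by rwa [hbij.1 (hΦ_out hΦx)])
    · obtain ⟨x, rfl⟩ := hbij.2 y
      by_cases hx : x ∈ K
      · exact mem_image_of_mem Φ hx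
      · exact absurd (hΦ_out hx ▸ hy) hx
  have hderiv (x : E) (hx : x ∈ K) :
      HasFDerivWithinAt Φ (ContinuousLinearMap.id ℝ E + g' x) K x :=
    ((hasFDerivWithinAt_id x K).add (hg' x hx)).congr (fun _ => hΦ_in) (hΦ_in hx)
  have hvol := integral_image_eq_integral_abs_det_fderiv_smul μ hK.measurableSet hderiv
    hbij.1.injOn fun _ => (1 : ℝ)
  rw [himage] at hvol
  simp only [smul_eq_mul, mul_one, integral_const, measureReal_restrict_apply_univ] at hvol
  rw [hvol]
  exact setIntegral_congr_fun hK.measurableSet fun x hx =>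
    (abs_of_pos (det_id_add_pos (hnorm x hx))).symm

theorem setIntegral_det_id_add_fderiv {g : E → E} (hg : ContDiff ℝ 1 g) {K : Set E}
    (hK : IsCompact K) (hconv : Convex ℝ K) (h0 : ∀ x ∈ frontier K, g x = 0) :
    ∫ x in K, (ContinuousLinearMap.id ℝ E + fderiv ℝ g x).det ∂μ = μ.real K := by
  have hg' : Continuous (fderiv ℝ g) := hg.continuous_fderiv one_ne_zero
  obtain ⟨C, hC0, hC⟩ := (hK.image hg').isBounded.exists_pos_norm_le
  choose P hPdeg hP using fun x => exists_polynomial_eval_eq_det_id_add_smul (fderiv ℝ g x)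
  have small (t : ℝ) (ht : t ∈ Ioo 0 C⁻¹) :
      ∫ x in K, (P x).eval t ∂μ = μ.real K := by
    have htC (x : E) (hx : x ∈ K) : ‖t • fderiv ℝ g x‖ ≤ t * C := by
      rw [norm_smul, Real.norm_of_nonneg ht.1.le]
      exact mul_le_mul_of_nonneg_left (hC _ (mem_image_of_mem _ hx)) ht.1.le
    have htC_lt : t * C < 1 := by
      simpa [hC0.ne'] using mul_lt_mul_of_pos_right ht.2 hC0
    have hderiv (x : E) : HasFDerivAt (t • g) (t • fderiv ℝ g x) x :=
      (hg.differentiable one_ne_zero x).hasFDerivAt.const_smul t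
    simp only [hP]
    refine setIntegral_det_id_add_of_lipschitzOnWith (C := (t * C).toNNReal) (g := t • g) μ
      hK.isClosed (by simpa using htC_lt) ?_ (fun x _ => (hderiv x).hasFDerivWithinAt)
      (fun x hx => (htC x hx).trans_lt htC_lt) fun x hx => by simp [h0 x hx]
    exact hconv.lipschitzOnWith_of_nnnorm_hasFDerivWithin_le
      (fun x _ => (hderiv x).hasFDerivWithinAt) fun x hx => NNReal.le_toNNReal_of_coe_le (htC x hx)
  have hint (t : ℝ) : IntegrableOn (fun x => (P x).eval t) K μ := by
    simp only [hP]
    exact (ContinuousLinearMap.continuous_det.comp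
      (by fun_prop)).continuousOn.integrableOn_compact hK
  have hinf : (Ioo 0 C⁻¹).Infinite := Ioo_infinite (inv_pos.2 hC0)
  simpa only [hP, one_smul] using
    integral_eval_eq_of_infinite hPdeg hinf (fun t _ => hint t) small 1

end DeterminantIntegral

section Brouwer

open Set Metric Module
open scoped Topology

variable {E : Type*} [NormedAddCommGroup E] [InnerProductSpace ℝ E] [FiniteDimensional ℝ E]

lemma det_eq_zero_of_norm_eq_const {f : E → E} {f' : E →L[ℝ] E} {x : E} (hf : HasFDerivAt f f' x)
    {R : ℝ} (hR : R ≠ 0) (hnorm : ∀ y, ‖f y‖ = R) : f'.det = 0 := by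
  by_contra hdet
  obtain ⟨v, hv⟩ : ∃ v, f' v = f x :=
    LinearMap.range_eq_top.1 (LinearMap.equivOfDetNeZero (f' : E →ₗ[ℝ] E) hdet).range (f x)
  have hconst : HasFDerivAt (fun y => ‖f y‖ ^ 2) (0 : E →L[ℝ] ℝ) x := by
    simpa only [hnorm] using hasFDerivAt_const _ x
  have := congrArg (fun l => l v) (hf.norm_sq.unique hconst)
  simp [hv, hnorm, hR] at this

lemma exists_eq_zero_of_contDiff {f : E → E} (hf : ContDiff ℝ 1 f) {R : ℝ} (hR : 0 < R)
    (hid : ∀ x, R ≤ ‖x‖ → f x = x) : ∃ x, f x = 0 := by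
  by_contra! hne
  let _ : MeasurableSpace E := borel E
  have : BorelSpace E := ⟨rfl⟩
  have : Nontrivial E := ⟨f 0, 0, hne 0⟩
  let u : E → E := fun x => R • ‖f x‖⁻¹ • f x
  have hu : ContDiff ℝ 1 u :=
    contDiff_const.smul (((hf.norm ℝ hne).inv fun x => norm_ne_zero_iff.2 (hne x)).smul hf)
  have hu_norm (x : E) : ‖u x‖ = R := by
    rw [norm_smul, norm_smul, norm_inv, norm_norm, inv_mul_cancel₀ (norm_ne_zero_iff.2 (hne x)),
      mul_one, Real.norm_of_nonneg hR.le]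
  let B : Set E := closedBall 0 R
  have hB : IsCompact B := isCompact_closedBall 0 R
  have hdet (x : E) :
      (ContinuousLinearMap.id ℝ E + fderiv ℝ (u - id) x).det = 0 := by
    have hu' := (hu.differentiable one_ne_zero x).hasFDerivAt
    rw [(hu'.sub (hasFDerivAt_id x)).fderiv, add_sub_cancel]
    exact det_eq_zero_of_norm_eq_const hu' hR.ne' hu_norm
  have hvol := setIntegral_det_id_add_fderiv volume (g := u - id) (hu.sub contDiff_id) hB
    (convex_closedBall 0 R) fun x hx => by
      rw [frontier_closedBall 0 hR.ne', mem_sphere_zero_iff_norm] at hx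
      simp [u, hid x hx.ge, hx, smul_smul, hR.ne']
  simp only [hdet, integral_zero] at hvol
  exact (ENNReal.toReal_pos (measure_closedBall_pos volume 0 hR).ne' hB.measure_lt_top.ne).ne hvol

lemma exists_isFixedPt_of_norm_le {f : E → E} (hf : Continuous f) {R : ℝ}
    (hb : ∀ x, ‖f x‖ ≤ R) : ∃ x, Function.IsFixedPt f x := by
  by_contra! hne
  have hR : 0 ≤ R := (norm_nonneg _).trans (hb 0)
  obtain ⟨p, hp, hpf, -⟩ := hf.exists_contDiff_approx 1 (ε := fun x => min 1 (dist (f x) x))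
    (by fun_prop) fun x => lt_min one_pos (dist_pos.2 (hne x))
  let χ : ContDiffBump (0 : E) := ⟨R + 1, R + 2, by linarith, by linarith⟩
  obtain ⟨x, hx⟩ := exists_eq_zero_of_contDiff (f := fun x => x - χ x • p x) (R := R + 2)
    (contDiff_id.sub (χ.contDiff.smul hp)) (by linarith) fun x hx => by
      simp [χ.zero_of_le_dist (x := x) (by simpa [χ] using hx)]
  have hx' : x = χ x • p x := sub_eq_zero.1 hx
  have hpx : ‖p x‖ ≤ R + 1 := by
    have hclose := (hpf x).trans_le (min_le_left _ _)
    rw [dist_eq_norm] at hclose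
    linarith [norm_le_norm_add_norm_sub' (p x) (f x), hb x]
  have hχx : χ x = 1 := χ.one_of_mem_closedBall <| by
    rw [mem_closedBall_zero_iff, hx', norm_smul, Real.norm_of_nonneg χ.nonneg]
    exact (mul_le_of_le_one_left (norm_nonneg _) χ.le_one).trans hpx
  have := (hpf x).trans_le (min_le_right _ _)
  rw [hχx, one_smul] at hx'
  rw [← hx', dist_comm] at this
  exact this.false

theorem exists_isFixedPt_closedBall (f : C(closedBall (0 : E) 1, closedBall (0 : E) 1)) :
    ∃ x, Function.IsFixedPt f x := by
  have : TietzeExtension (closedBall (0 : E) 1) := instTietzeExtensionUnitClosedBall (𝕜 := ℝ)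
  obtain ⟨g, rfl⟩ := f.exists_restrict_eq isClosed_closedBall
  obtain ⟨x, hx⟩ := exists_isFixedPt_of_norm_le (f := fun x => (g x : E)) (by fun_prop)
    fun x => mem_closedBall_zero_iff.1 (g x).2
  exact ⟨⟨x, hx ▸ (g x).2⟩, Subtype.ext hx⟩

end Brouwer

section InvarianceOfDomain

open Set Metric Module Topology

section Perturbation

variable {E : Type*} [NormedAddCommGroup E] [NormedSpace ℝ E] [FiniteDimensional ℝ E]
  [MeasurableSpace E] [BorelSpace E]

lemma exists_contDiff_dist_lt_forall_ne_zero (μ : Measure E) [μ.IsAddHaarMeasure] {g : E → E}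
    (hg : Continuous g) {A : Set E} (hA : μ A = 0) {ε : ℝ} (hε : 0 < ε) :
    ∃ p : E → E, ContDiff ℝ 1 p ∧ (∀ y, dist (p y) (g y) < ε) ∧ ∀ y ∈ A, p y ≠ 0 := by
  obtain ⟨q, hq, hqg, -⟩ := hg.exists_contDiff_approx 1 (ε := fun _ => ε / 2) continuous_const
    fun _ => half_pos hε
  have hqA : μ (q '' A) = 0 := addHaar_image_eq_zero_of_differentiableOn_of_addHaar_eq_zero μ
    (hq.differentiable one_ne_zero).differentiableOn hA
  obtain ⟨w, hw, hwA⟩ : ∃ w ∈ ball (0 : E) (ε / 2), w ∉ q '' A := by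
    by_contra! hsub
    exact (measure_ball_pos μ 0 (half_pos hε)).ne' (measure_mono_null hsub hqA)
  refine ⟨fun y => q y - w, hq.sub contDiff_const, fun y => ?_, fun y hy hyw => ?_⟩
  · have hqw : dist (q y - w) (q y) < ε / 2 := by simpa using hw
    linarith [dist_triangle (q y - w) (q y) (g y), hqg y]
  · exact hwA ⟨y, hy, sub_eq_zero.1 hyw⟩

end Perturbation

section PushOut

variable {E : Type*} [NormedAddCommGroup E] [NormedSpace ℝ E]

/-- The radial map with centre `c` that pushes the points at distance at most `e` from `c` onto the
sphere of radius `e` and fixes the points further away; it is meaningful only away from `c`. -/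
def pushOut (c : E) (e : ℝ) (y : E) : E :=
  c + max (e / dist y c) 1 • (y - c)

lemma continuousOn_pushOut (c : E) (e : ℝ) : ContinuousOn (pushOut c e) {c}ᶜ := by
  have hd : ContinuousOn (fun y => e / dist y c) {c}ᶜ :=
    continuousOn_const.div (by fun_prop) fun y hy => dist_ne_zero.2 hy
  exact continuousOn_const.add ((hd.sup continuousOn_const).smul (by fun_prop))

lemma pushOut_of_le_dist {c y : E} {e : ℝ} (he : 0 < e) (hy : e ≤ dist y c) :
    pushOut c e y = y := by
  have : max (e / dist y c) 1 = 1 := max_eq_right ((div_le_one (he.trans_le hy)).2 hy)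
  rw [pushOut, this, one_smul, add_sub_cancel]

lemma pushOut_mem_sphere {c y : E} {e : ℝ} (hyc : y ≠ c) (hy : dist y c ≤ e) :
    pushOut c e y ∈ sphere c e := by
  have hpos : 0 < dist y c := dist_pos.2 hyc
  have : max (e / dist y c) 1 = e / dist y c := max_eq_left ((one_le_div hpos).2 hy)
  rw [mem_sphere_iff_norm, pushOut, this, add_sub_cancel_left, norm_smul, ← dist_eq_norm,
    Real.norm_of_nonneg (div_nonneg (hpos.le.trans hy) hpos.le), div_mul_cancel₀ _ hpos.ne']

end PushOut

variable {E F : Type*} [NormedAddCommGroup E] [NormedAddCommGroup F]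

lemma exists_continuousOn_ne_zero_dist_le [NormedSpace ℝ E] [FiniteDimensional ℝ E] {K : Set E}
    (hK : IsCompact K) {c : E} (hcK : c ∉ K) {e δ : ℝ} (he : 0 < e) (hδ : 0 < δ) {g : E → E}
    (hg : Continuous g) (hg_far : ∀ y ∈ K, e ≤ dist y c → g y ≠ 0)
    (hg_near : ∀ y ∈ closedBall c e, ‖g y‖ ≤ δ) :
    ∃ h : E → E, ContinuousOn h K ∧ (∀ y ∈ K, h y ≠ 0) ∧ ∀ y ∈ K, dist (h y) (g y) ≤ 3 * δ := by
  let _ : MeasurableSpace E := borel E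
  have : BorelSpace E := ⟨rfl⟩
  have hfar : IsCompact (K ∩ {y | e ≤ dist y c}) :=
    hK.inter_right (isClosed_le continuous_const (by fun_prop))
  obtain ⟨d, hd, hd_le⟩ := hfar.exists_forall_le' (a := 0) (f := fun y => ‖g y‖) (by fun_prop)
    fun y hy => norm_pos_iff.2 (hg_far y hy.1 hy.2)
  obtain ⟨p, hp, hpg, hp0⟩ := exists_contDiff_dist_lt_forall_ne_zero Measure.addHaar hg
    (Measure.addHaar_sphere_of_ne_zero _ c he.ne') (lt_min hd hδ)
  refine ⟨p ∘ pushOut c e, hp.continuous.comp_continuousOn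
    ((continuousOn_pushOut c e).mono fun y hy hyc => hcK (hyc ▸ hy)),
    fun y hy => ?_, fun y hy => ?_⟩
  · rcases le_or_gt e (dist y c) with hey | hye
    · rw [Function.comp_apply, pushOut_of_le_dist he hey]
      intro hpy
      have := (hpg y).trans_le (min_le_left _ _)
      rw [hpy, dist_zero_left] at this
      exact (hd_le y ⟨hy, hey⟩).not_gt this
    · exact hp0 _ (pushOut_mem_sphere (ne_of_mem_of_not_mem hy hcK) hye.le)
  · rcases le_or_gt e (dist y c) with hey | hye
    · rw [Function.comp_apply, pushOut_of_le_dist he hey]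
      linarith [(hpg y).trans_le (min_le_right _ _)]
    · have hmem := pushOut_mem_sphere (ne_of_mem_of_not_mem hy hcK) hye.le
      have h1 := (hpg (pushOut c e y)).trans_le (min_le_right _ _)
      have h2 := hg_near _ (sphere_subset_closedBall hmem)
      have h3 := hg_near y hye.le
      have h4 := dist_triangle (p (pushOut c e y)) (g (pushOut c e y)) (g y)
      have h5 := dist_le_norm_add_norm (g (pushOut c e y)) (g y)
      rw [Function.comp_apply]
      linarith

lemma exists_eq_zero_of_dist_leftInverse_le [InnerProductSpace ℝ E] [FiniteDimensional ℝ E]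
    {X : Type*} [TopologicalSpace X] {f : E → X} (hf : ContinuousOn f (closedBall 0 1)) {h : X → E}
    (hh : ContinuousOn h (f '' closedBall 0 1))
    (hdist : ∀ x ∈ closedBall (0 : E) 1, dist (h (f x)) x ≤ 1) :
    ∃ y ∈ f '' closedBall 0 1, h y = 0 := by
  let φ : C(closedBall (0 : E) 1, closedBall (0 : E) 1) :=
    { toFun := fun x => ⟨x - h (f x), by
        simpa [← dist_eq_norm, dist_comm] using hdist x x.2⟩
      continuous_toFun := by
        refine Continuous.subtype_mk (continuous_subtype_val.sub ?_) _
        exact (hh.comp hf (mapsTo_image f _)).domRestrict }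
  obtain ⟨x, hx⟩ := exists_isFixedPt_closedBall φ
  exact ⟨f x, mem_image_of_mem f x.2, sub_eq_self.1 (congrArg Subtype.val hx)⟩

lemma image_closedBall_mem_nhds [InnerProductSpace ℝ E] [FiniteDimensional ℝ E] {f : E → E}
    (hf : ContinuousOn f (closedBall 0 1)) (hinj : InjOn f (closedBall 0 1)) :
    f '' closedBall 0 1 ∈ 𝓝 (f 0) := by
  have hB : IsCompact (closedBall (0 : E) 1) := isCompact_closedBall 0 1
  have h0B : (0 : E) ∈ closedBall (0 : E) 1 := mem_closedBall_self zero_le_one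
  have hK : IsCompact (f '' closedBall 0 1) := hB.image_of_continuousOn hf
  obtain ⟨g, hg⟩ : ∃ g : C(E, E), ∀ x ∈ closedBall (0 : E) 1, g (f x) = x := by
    have : CompactSpace (closedBall (0 : E) 1) := isCompact_iff_compactSpace.1 hB
    have : TietzeExtension E := .of_tvs ℝ
    obtain ⟨g, hg⟩ := ContinuousMap.exists_extension
      (hf.domRestrict.isClosedEmbedding (injOn_iff_injective.1 hinj))
      ⟨Subtype.val, continuous_subtype_val⟩
    exact ⟨g, fun x hx => DFunLike.congr_fun hg ⟨x, hx⟩⟩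
  by_contra hnhds
  obtain ⟨e, he, hge⟩ : ∃ e > 0, ∀ y ∈ ball (f 0) (2 * e), ‖g y‖ ≤ 1 / 3 := by
    obtain ⟨d, hd, hgd⟩ := Metric.continuous_iff.1 g.continuous (f 0) (1 / 3) (by norm_num)
    refine ⟨d / 2, half_pos hd, fun y hy => ?_⟩
    have := hgd y (by linarith [mem_ball.1 hy])
    rw [hg 0 h0B, dist_zero_right] at this
    exact this.le
  obtain ⟨c, hc, hcK⟩ : ∃ c ∈ ball (f 0) e, c ∉ f '' closedBall 0 1 :=
    not_subset.1 fun hsub => hnhds (mem_of_superset (ball_mem_nhds _ he) hsub)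
  obtain ⟨h, hh, hh0, hhg⟩ := exists_continuousOn_ne_zero_dist_le hK hcK he (δ := 1 / 3)
    (by norm_num) g.continuous
    (by
      rintro _ ⟨x, hx, rfl⟩ hxc hgx
      rw [hg x hx] at hgx
      subst hgx
      rw [dist_comm] at hxc
      exact hxc.not_gt hc)
    fun y hy => hge y <| by
      rw [mem_ball]
      linarith [dist_triangle y c (f 0), mem_closedBall.1 hy, mem_ball.1 hc]
  obtain ⟨y, hy, hy0⟩ := exists_eq_zero_of_dist_leftInverse_le hf hh fun x hx => by
    simpa [hg x hx] using hhg (f x) (mem_image_of_mem f hx)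
  exact hh0 y hy hy0

variable [NormedSpace ℝ E] [FiniteDimensional ℝ E] [NormedSpace ℝ F] [FiniteDimensional ℝ F]

theorem invariance_of_domain (hEF : finrank ℝ E = finrank ℝ F) {f : E → F} {x : E} {O : Set E}
    (hO : O ∈ 𝓝 x) (hf : ContinuousOn f O) (hinj : InjOn f O) : f '' O ∈ 𝓝 (f x) := by
  let a : Euc (finrank ℝ E) ≃L[ℝ] E := .ofFinrankEq finrank_euclideanSpace_fin
  let b : F ≃L[ℝ] Euc (finrank ℝ E) := .ofFinrankEq (hEF ▸ finrank_euclideanSpace_fin.symm)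
  obtain ⟨r, hr, hrO⟩ : ∃ r > 0, ∀ v ∈ closedBall (0 : Euc (finrank ℝ E)) r, x + a v ∈ O := by
    have hcont : ContinuousAt (fun v => x + a v) 0 := by fun_prop
    exact nhds_basis_closedBall.mem_iff.1 (hcont.preimage_mem_nhds (by simpa using hO))
  let q : Euc (finrank ℝ E) → E := fun v => x + a (r • v)
  have hqO : MapsTo q (closedBall 0 1) O := fun v hv => hrO _ <| by
    rw [mem_closedBall_zero_iff] at hv ⊢
    rw [norm_smul, Real.norm_of_nonneg hr.le]
    exact mul_le_of_le_one_right hr.le hv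
  have hq_inj : Function.Injective q := fun v w hvw =>
    smul_right_injective _ hr.ne' (a.injective (add_left_cancel hvw))
  have hq0 : q 0 = x := by simp [q]
  have himage := image_closedBall_mem_nhds (f := fun v => b (f (q v)))
    (b.continuous.comp_continuousOn (hf.comp (by fun_prop) hqO))
    fun v hv w hw hvw => hq_inj (hinj (hqO hv) (hqO hw) (b.injective hvw))
  rw [hq0] at himage
  refine mem_of_superset (b.continuous.continuousAt.preimage_mem_nhds himage) ?_
  rintro y ⟨v, hv, hvy⟩
  exact ⟨q v, hqO hv, b.injective hvy⟩

theorem finrank_le_of_continuousOn_injOn {f : E → F} {x : E} {O : Set E} (hO : O ∈ 𝓝 x)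
    (hf : ContinuousOn f O) (hinj : InjOn f O) : finrank ℝ E ≤ finrank ℝ F := by
  by_contra! hlt
  let i : F →ₗ[ℝ] F × Euc (finrank ℝ E - finrank ℝ F) := LinearMap.inl ℝ F _
  have hdim : finrank ℝ E = finrank ℝ (F × Euc (finrank ℝ E - finrank ℝ F)) := by
    rw [finrank_prod, finrank_euclideanSpace_fin]
    omega
  have himage := invariance_of_domain hdim hO
    (i.continuous_of_finiteDimensional.comp_continuousOn hf)
    (LinearMap.inl_injective.injOn.comp hinj (mapsTo_univ _ _))
  have htop : LinearMap.range i = ⊤ := by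
    refine Submodule.eq_top_of_nonempty_interior' _ ⟨i (f x), mem_interior_iff_mem_nhds.2 ?_⟩
    refine mem_of_superset himage ?_
    rintro _ ⟨y, -, rfl⟩
    exact LinearMap.mem_range_self i (f y)
  have := LinearMap.finrank_range_le i
  rw [htop, finrank_top] at this
  omega

end InvarianceOfDomain

section LocalParametrization

open Set Metric Module Topology

/-- `ψ` embeds the topological vector space `E` onto a neighborhood of `y` relative to `S`, with the
origin sent to `y`. Away from the origin `ψ` may leave `S`, so that `ψ` can be a globally defined
piecewise linear map. -/
structure ParametrizesAt {E X : Type*} [Zero E] [TopologicalSpace E] [TopologicalSpace X]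
    (ψ : E → X) (S : Set X) (y : X) : Prop where
  isEmbedding : IsEmbedding ψ
  map_zero : ψ 0 = y
  eventually_mem : ∀ᶠ v in 𝓝 0, ψ v ∈ S
  range_mem_nhdsWithin : range ψ ∈ 𝓝[S] y

lemma ParametrizesAt.preimage_mem_nhds {E X : Type*} [Zero E] [TopologicalSpace E]
    [TopologicalSpace X] {ψ : E → X} {S U : Set X} {y : X} (hψ : ParametrizesAt ψ S y)
    (hU : U ∈ 𝓝[S] y) : ψ ⁻¹' U ∈ 𝓝 0 :=
  tendsto_nhdsWithin_iff.2 ⟨hψ.map_zero ▸ hψ.isEmbedding.continuous.tendsto 0, hψ.eventually_mem⟩ hU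

lemma ParametrizesAt.comp_continuousLinearEquiv {E E' X : Type*} [NormedAddCommGroup E]
    [NormedSpace ℝ E] [NormedAddCommGroup E'] [NormedSpace ℝ E'] [TopologicalSpace X]
    {ψ : E → X} {S : Set X} {y : X} (hψ : ParametrizesAt ψ S y) (e : E' ≃L[ℝ] E) :
    ParametrizesAt (ψ ∘ e) S y where
  isEmbedding := hψ.isEmbedding.comp e.toHomeomorph.isEmbedding
  map_zero := by simp [hψ.map_zero]
  eventually_mem := (e.continuous.tendsto' 0 0 (_root_.map_zero e)).eventually hψ.eventually_mem
  range_mem_nhdsWithin := by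
    rw [e.surjective.range_comp]
    exact hψ.range_mem_nhdsWithin

variable {E F X : Type*} [NormedAddCommGroup E] [NormedSpace ℝ E] [FiniteDimensional ℝ E]
  [NormedAddCommGroup F] [NormedSpace ℝ F] [FiniteDimensional ℝ F] [TopologicalSpace X]
  {ψ : E → X} {S : Set X} {y : X}

lemma range_mem_nhds_of_continuous_injective (hEF : finrank ℝ E = finrank ℝ F) {O : Set E}
    {f : O → F} (hf : Continuous f) (hinj : Function.Injective f) {x : O} (hO : O ∈ 𝓝 (x : E)) :
    range f ∈ 𝓝 (f x) := by
  let g : E → F := Function.extend Subtype.val f 0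
  have hg (v : O) : g v = f v := Subtype.val_injective.extend_apply f 0 v
  have hgf : O.domRestrict g = f := funext hg
  have hg_cont : ContinuousOn g O := continuousOn_iff_continuous_domRestrict.2 (hgf ▸ hf)
  have hg_inj : InjOn g O := fun v hv w hw hvw =>
    congrArg Subtype.val (hinj (a₁ := ⟨v, hv⟩) (a₂ := ⟨w, hw⟩) (by rwa [← hg, ← hg]))
  rw [← hg]
  refine mem_of_superset (invariance_of_domain hEF hO hg_cont hg_inj) ?_
  rintro _ ⟨v, hv, rfl⟩
  exact ⟨⟨v, hv⟩, (hg ⟨v, hv⟩).symm⟩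

lemma ParametrizesAt.range_mem_nhdsWithin_of_injective (hψ : ParametrizesAt ψ S y)
    (hFE : finrank ℝ F = finrank ℝ E) {M : F → X} (hM : Continuous M)
    (hinj : Function.Injective M) (hMS : ∀ q, M q ∈ S) {x : F} (hx : M x = y) :
    range M ∈ 𝓝[S] y := by
  let f : M ⁻¹' range ψ → E := fun q => hψ.isEmbedding.toHomeomorph.symm ⟨M q, q.2⟩
  have hψf (q) : ψ (f q) = M q :=
    congrArg Subtype.val (hψ.isEmbedding.toHomeomorph.apply_symm_apply ⟨M q, q.2⟩)
  have hf : Continuous f := hψ.isEmbedding.toHomeomorph.symm.continuous.comp (by fun_prop)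
  have hf_inj : Function.Injective f := fun p q hpq =>
    Subtype.ext (hinj (by rw [← hψf, ← hψf, hpq]))
  have hO : M ⁻¹' range ψ ∈ 𝓝 x := tendsto_nhdsWithin_iff.2
    ⟨hx ▸ hM.tendsto x, .of_forall hMS⟩ hψ.range_mem_nhdsWithin
  have hfx : f ⟨x, mem_of_mem_nhds hO⟩ = 0 := by
    apply hψ.isEmbedding.injective
    rw [hψf, hψ.map_zero, hx]
  have hrange := range_mem_nhds_of_continuous_injective hFE hf hf_inj
    (x := ⟨x, mem_of_mem_nhds hO⟩) hO
  rw [hfx] at hrange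
  have hψM : ψ ⁻¹' range M ∈ 𝓝 0 := by
    refine mem_of_superset hrange ?_
    rintro _ ⟨q, rfl⟩
    exact ⟨q, (hψf q).symm⟩
  rw [← Filter.mem_map, hψ.isEmbedding.map_nhds_eq, hψ.map_zero] at hψM
  exact nhdsWithin_le_of_mem hψ.range_mem_nhdsWithin hψM

end LocalParametrization

section Cone

open Set Metric Module Topology

lemma zero_mem_Tcone (r : ℕ) : (0 : ℝ × ℝ) ∈ Tcone r := Or.inl rfl

lemma mem_Tcone_of_lt {r k : ℕ} (hk : k < r) {t : ℝ} (ht0 : 0 ≤ t) (ht1 : t < 1) :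
    (t, t * k) ∈ Tcone r :=
  Or.inr (mem_biUnion (Finset.mem_coe.2 (Finset.mem_range.2 hk)) ⟨t, ht0, ht1, by simp⟩)

lemma fst_nonneg_of_mem_Tcone {r : ℕ} {p : ℝ × ℝ} (hp : p ∈ Tcone r) : 0 ≤ p.1 := by
  rcases hp with rfl | hp
  · exact le_rfl
  · obtain ⟨k, -, t, ht, -, rfl⟩ := mem_iUnion₂.1 hp
    simpa using ht

lemma snd_eq_zero_of_mem_Tcone {r : ℕ} (hr : r ≤ 1) {p : ℝ × ℝ} (hp : p ∈ Tcone r) : p.2 = 0 := by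
  rcases hp with rfl | hp
  · rfl
  · obtain ⟨k, hk, t, -, -, rfl⟩ := mem_iUnion₂.1 hp
    have : k = 0 := by have := Finset.mem_range.1 hk; omega
    simp [this]

lemma exists_injective_range_notMem_nhds {r : ℕ} (hr : 3 ≤ r) :
    ∃ τ : ℝ → Tcone r, Continuous τ ∧ Function.Injective τ ∧ τ 0 = ⟨0, zero_mem_Tcone r⟩ ∧
      range τ ∉ 𝓝 ⟨0, zero_mem_Tcone r⟩ := by
  let c : ℝ → ℝ := fun s => (Homeomorph.unitBall s : ℝ)
  have hc_lt (s : ℝ) : |c s| < 1 := mem_ball_zero_iff.1 (Homeomorph.unitBall s).2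
  have hc_inj : Function.Injective c :=
    Subtype.val_injective.comp (Homeomorph.unitBall (E := ℝ)).injective
  have hc : Continuous c := by fun_prop
  have hc0 : c 0 = 0 := Homeomorph.coe_unitBall_apply_zero
  have hmem (s : ℝ) : (|c s|, max (-c s) 0) ∈ Tcone r := by
    rcases le_total 0 (c s) with hs | hs
    · simpa [hs] using mem_Tcone_of_lt (k := 0) (by omega) (abs_nonneg (c s)) (hc_lt s)
    · simpa [hs, abs_of_nonpos] using
        mem_Tcone_of_lt (k := 1) (by omega) (abs_nonneg (c s)) (hc_lt s)
  refine ⟨fun s => ⟨_, hmem s⟩, by fun_prop, fun s t hst => hc_inj ?_, by simp [hc0],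
    fun hrange => ?_⟩
  · obtain ⟨habs, hneg⟩ := Prod.ext_iff.1 (congrArg Subtype.val hst)
    have hsplit (u : ℝ) : u = |u| - 2 * max (-u) 0 := by
      rcases le_total 0 u with hu | hu
      · simp [hu, abs_of_nonneg]
      · simp only [hu, abs_of_nonpos, Left.nonneg_neg_iff, sup_of_le_left]
        ring
    rw [hsplit (c s), hsplit (c t)]
    exact congrArg₂ (fun a b => a - 2 * b) habs hneg
  · obtain ⟨O, hO, hO_range⟩ := mem_nhds_subtype _ _ _ |>.1 hrange
    have hleg : Tendsto (fun t : ℝ => ((t, t * (2 : ℕ)) : ℝ × ℝ)) (𝓝[>] 0) (𝓝 0) := by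
      have : Continuous fun t : ℝ => ((t, t * (2 : ℕ)) : ℝ × ℝ) := by fun_prop
      simpa [← Prod.zero_eq_mk] using (this.tendsto 0).mono_left nhdsWithin_le_nhds
    obtain ⟨t, ht, ht0, ht1⟩ := ((hleg.eventually hO).and (Ioo_mem_nhdsGT one_pos)).exists
    obtain ⟨s, hs⟩ := hO_range (a := ⟨_, mem_Tcone_of_lt hr ht0.le ht1⟩) ht
    obtain ⟨habs, hneg⟩ := Prod.ext_iff.1 (congrArg Subtype.val hs)
    have := max_le (neg_le_abs (c s)) (abs_nonneg (c s))
    rw [show max (-c s) 0 = t * (2 : ℕ) from hneg, show |c s| = t from habs] at this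
    push_cast at this
    linarith

variable {E F X : Type*} [NormedAddCommGroup E] [NormedSpace ℝ E] [FiniteDimensional ℝ E]
  [NormedAddCommGroup F] [NormedSpace ℝ F] [FiniteDimensional ℝ F] [TopologicalSpace X]
  {ψ : E → X} {S U : Set X} {y : X} {r : ℕ}

lemma ParametrizesAt.two_le_of_homeomorph (hψ : ParametrizesAt ψ S y)
    (hEF : finrank ℝ E = finrank ℝ F + 1) (hU : U ∈ 𝓝[S] y) (hyU : y ∈ U)
    (h : U ≃ₜ Tcone r × F) (hy : ((h ⟨y, hyU⟩).1 : ℝ × ℝ) = 0) : 2 ≤ r := by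
  by_contra! hr
  let f : ψ ⁻¹' U → ℝ × F := fun v => (((h ⟨ψ v, v.2⟩).1 : ℝ × ℝ).1, (h ⟨ψ v, v.2⟩).2)
  have hψU : Continuous fun v : ψ ⁻¹' U => (⟨ψ v, v.2⟩ : U) :=
    (hψ.isEmbedding.continuous.comp continuous_subtype_val).subtype_mk _
  have hf : Continuous f := by fun_prop
  have hf_inj : Function.Injective f := fun v w hvw => by
    obtain ⟨hfst, hsnd⟩ := Prod.ext_iff.1 hvw
    have hcone : (h ⟨ψ v, v.2⟩).1 = (h ⟨ψ w, w.2⟩).1 := Subtype.ext <| Prod.ext hfst <| by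
      rw [snd_eq_zero_of_mem_Tcone (by omega) (h ⟨ψ v, v.2⟩).1.2,
        snd_eq_zero_of_mem_Tcone (by omega) (h ⟨ψ w, w.2⟩).1.2]
    have := congrArg Subtype.val (h.injective (Prod.ext hcone hsnd))
    exact Subtype.ext (hψ.isEmbedding.injective this)
  have hO : ψ ⁻¹' U ∈ 𝓝 0 := hψ.preimage_mem_nhds hU
  have hrange := range_mem_nhds_of_continuous_injective (by rw [hEF, finrank_prod, finrank_self,
    add_comm]) hf hf_inj (x := ⟨0, mem_of_mem_nhds hO⟩) hO
  have hf0 : (f ⟨0, mem_of_mem_nhds hO⟩).1 = 0 := by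
    simp only [f, hψ.map_zero, hy, Prod.fst_zero]
  have hhalf : Ici (0 : ℝ) ∈ 𝓝 0 := by
    have := isOpenMap_fst.image_mem_nhds hrange
    rw [hf0] at this
    refine mem_of_superset this ?_
    rintro _ ⟨_, ⟨v, rfl⟩, rfl⟩
    exact fst_nonneg_of_mem_Tcone (h ⟨ψ v, v.2⟩).1.2
  simpa using mem_interior_iff_mem_nhds.2 hhalf

lemma ParametrizesAt.le_two_of_homeomorph (hψ : ParametrizesAt ψ S y)
    (hEF : finrank ℝ E = finrank ℝ F + 1) (hUS : U ⊆ S) (hyU : y ∈ U)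
    (h : U ≃ₜ Tcone r × F) (hy : ((h ⟨y, hyU⟩).1 : ℝ × ℝ) = 0) : r ≤ 2 := by
  by_contra! hr
  obtain ⟨τ, hτ, hτ_inj, hτ0, hτ_range⟩ := exists_injective_range_notMem_nhds hr
  have hy' : (h ⟨y, hyU⟩).1 = ⟨0, zero_mem_Tcone r⟩ := Subtype.ext hy
  let M : ℝ × F → X := fun q => h.symm (Prod.map τ id q)
  have hM0 : M (0, (h ⟨y, hyU⟩).2) = y := by
    simp [M, hτ0, ← hy']
  have hM_range : range M ∈ 𝓝[S] y := hψ.range_mem_nhdsWithin_of_injective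
    (by rw [hEF, finrank_prod, finrank_self, add_comm]) (by fun_prop)
    (Subtype.val_injective.comp (h.symm.injective.comp (hτ_inj.prodMap Function.injective_id)))
    (fun q => hUS (h.symm _).2) hM0
  have hpre : h.symm ⁻¹' (Subtype.val ⁻¹' range M) ∈ 𝓝 (h ⟨y, hyU⟩) := by
    refine h.symm.continuous.continuousAt.preimage_mem_nhds ?_
    rw [h.symm_apply_apply]
    exact preimage_coe_mem_nhds_subtype.2 (nhdsWithin_mono y hUS hM_range)
  have hsub : h.symm ⁻¹' (Subtype.val ⁻¹' range M) ⊆ range τ ×ˢ univ := by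
    rintro q ⟨p, hp⟩
    rw [← h.symm.injective (Subtype.ext hp)]
    exact ⟨mem_range_self p.1, mem_univ _⟩
  rw [← Prod.mk.eta (p := h ⟨y, hyU⟩), hy'] at hpre
  exact hτ_range (prod_mem_nhds_iff.1 (mem_of_superset hpre hsub)).1

end Cone

section ConvexHull

open Set Module Topology

variable {V : Type*} [NormedAddCommGroup V] [NormedSpace ℝ V]

lemma sub_mem_vectorSpan {s : Set V} {a b : V} (ha : a ∈ convexHull ℝ s)
    (hb : b ∈ convexHull ℝ s) : a - b ∈ vectorSpan ℝ s := by
  rw [← direction_affineSpan]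
  exact AffineSubspace.vsub_mem_direction (convexHull_subset_affineSpan s ha)
    (convexHull_subset_affineSpan s hb)

lemma isClosed_convexHull (s : Finset V) : IsClosed (convexHull ℝ (s : Set V)) :=
  (s.finite_toSet.isCompact_convexHull ℝ).isClosed

instance finiteDimensional_vectorSpan (s : Finset V) :
    FiniteDimensional ℝ (vectorSpan ℝ (s : Set V)) :=
  finiteDimensional_vectorSpan_of_finite ℝ s.finite_toSet

variable {F : Type*} [NormedAddCommGroup F] [NormedSpace ℝ F] [FiniteDimensional ℝ F] {g : F → V}

lemma interior_preimage_convexHull_eq_empty (hg : Continuous g) (hinj : Function.Injective g)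
    {s : Finset V} (hs : s.card ≤ finrank ℝ F) :
    interior (g ⁻¹' convexHull ℝ (s : Set V)) = ∅ := by
  by_contra! ⟨x, hx⟩
  have hgx : g x ∈ convexHull ℝ (s : Set V) :=
    mem_preimage.1 (interior_subset hx)
  obtain ⟨P, hP⟩ := Submodule.ClosedComplemented.of_finiteDimensional (vectorSpan ℝ (s : Set V))
  have hP_inj : InjOn (fun v => P (g v - g x)) (g ⁻¹' convexHull ℝ (s : Set V)) := by
    intro v hv w hw hvw
    have hPv := hP ⟨g v - g x, sub_mem_vectorSpan hv hgx⟩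
    have hPw := hP ⟨g w - g x, sub_mem_vectorSpan hw hgx⟩
    exact hinj (sub_left_injective (congrArg Subtype.val (hPv.symm.trans (hvw.trans hPw))))
  have hle := finrank_le_of_continuousOn_injOn (mem_interior_iff_mem_nhds.1 hx) (by fun_prop) hP_inj
  have hs_pos : 0 < s.card :=
    Finset.card_pos.2 (Finset.coe_nonempty.1 (convexHull_nonempty_iff.1 ⟨_, hgx⟩))
  have hspan := finrank_vectorSpan_image_finset_le ℝ id s (n := s.card - 1) (by omega)
  rw [Finset.image_id] at hspan
  omega

lemma exists_forall_notMem_convexHull (hg : Continuous g) (hinj : Function.Injective g)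
    {T : Set (Finset V)} (hT : T.Finite) (hcard : ∀ s ∈ T, s.card ≤ finrank ℝ F) {x : F} {O : Set F}
    (hO : O ∈ 𝓝 x) : ∃ v ∈ O, ∀ s ∈ T, g v ∉ convexHull ℝ (s : Set V) := by
  have hdense : Dense (⋂ s ∈ T, (g ⁻¹' convexHull ℝ (s : Set V))ᶜ) :=
    dense_biInter_of_isOpen (fun s _ => ((isClosed_convexHull s).preimage hg).isOpen_compl)
      hT.countable fun s hs => interior_eq_empty_iff_dense_compl.1
        (interior_preimage_convexHull_eq_empty hg hinj (hcard s hs))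
  obtain ⟨v, hvT, hvO⟩ := hdense.inter_nhds_nonempty hO
  exact ⟨v, hvO, fun s hs => mem_iInter₂.1 hvT s hs⟩

lemma exists_pos_weights {s : Finset V} {y : V} (hy : y ∈ convexHull ℝ (s : Set V))
    (hmin : ∀ i ∈ s, y ∉ convexHull ℝ (s.erase i : Set V)) :
    ∃ w : V → ℝ, (∀ i ∈ s, 0 < w i) ∧ ∑ i ∈ s, w i = 1 ∧ ∑ i ∈ s, w i • i = y := by
  obtain ⟨w, hw0, hw1, hwy⟩ := Finset.mem_convexHull'.1 hy
  refine ⟨w, fun i hi => (hw0 i hi).lt_of_ne fun hwi => hmin i hi ?_, hw1, hwy⟩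
  rw [Finset.mem_convexHull']
  refine ⟨w, fun j hj => hw0 j (Finset.mem_of_mem_erase hj), ?_, ?_⟩
  · rw [Finset.sum_erase s hwi.symm, hw1]
  · rw [Finset.sum_erase s (by rw [← hwi, zero_smul]), hwy]

lemma vectorSpan_eq_span_sub {s : Set V} {y : V} (hy : y ∈ affineSpan ℝ s) :
    vectorSpan ℝ s = Submodule.span ℝ ((· - y) '' s) := by
  rw [← vectorSpan_insert_eq_vectorSpan hy,
    vectorSpan_eq_span_vsub_set_right ℝ (mem_insert y s), image_insert_eq, vsub_self,
    Submodule.span_insert_zero]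
  rfl

lemma eventually_add_mem_convexHull {s : Finset V} {y : V} (hy : y ∈ convexHull ℝ (s : Set V))
    (hmin : ∀ i ∈ s, y ∉ convexHull ℝ (s.erase i : Set V)) :
    ∀ᶠ v : vectorSpan ℝ (s : Set V) in 𝓝 0, y + v ∈ convexHull ℝ (s : Set V) := by
  obtain ⟨w, hw0, hw1, hwy⟩ := exists_pos_weights hy hmin
  rw [← Finset.sum_coe_sort] at hw1 hwy
  have hd (i : s) : (i : V) - y ∈ vectorSpan ℝ (s : Set V) :=
    sub_mem_vectorSpan (subset_convexHull ℝ _ i.2) hy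
  let T : (s → ℝ) →ₗ[ℝ] vectorSpan ℝ (s : Set V) :=
    Fintype.linearCombination ℝ fun i => ⟨(i : V) - y, hd i⟩
  have hT (c : s → ℝ) : (T c : V) = ∑ i : s, c i • (i : V) - (∑ i : s, c i) • y := by
    simp [T, Fintype.linearCombination_apply, smul_sub, Finset.sum_smul]
  have hT_surj : Function.Surjective T := by
    rw [← LinearMap.range_eq_top, Fintype.range_linearCombination,
      Submodule.span_range_subtype_eq_top_iff _ hd,
      vectorSpan_eq_span_sub (convexHull_subset_affineSpan _ hy), image_eq_range]
    rfl
  have hpos : {c : s → ℝ | ∀ i : s, 0 < w i * (1 - ∑ j, c j) + c i} ∈ 𝓝 0 := by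
    refine eventually_all.2 fun i => ?_
    have hcont : Continuous fun c : s → ℝ => w i * (1 - ∑ j, c j) + c i := by fun_prop
    exact hcont.continuousAt.eventually (lt_mem_nhds (by simpa using hw0 i i.2))
  have himage := (T.isOpenMap_of_finiteDimensional hT_surj).image_mem_nhds hpos
  rw [map_zero] at himage
  filter_upwards [himage]
  rintro _ ⟨c, hc, rfl⟩
  refine mem_convexHull_of_exists_fintype (fun i : s => w i * (1 - ∑ j, c j) + c i) (↑)
    (fun i => (hc i).le) ?_ (fun i => i.2) ?_
  · rw [Finset.sum_add_distrib, ← Finset.sum_mul, hw1]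
    ring
  · simp_rw [add_smul, mul_comm (w _), mul_smul]
    rw [Finset.sum_add_distrib, ← Finset.smul_sum, hwy, hT]
    module

end ConvexHull

section FoldedMap

open Set Module Topology

variable {V : Type*} [NormedAddCommGroup V] [NormedSpace ℝ V] {D : Submodule ℝ V} {c d : V}

/-- The piecewise linear map `ℝ × D → V` sending the half-space `[0, ∞) × D` to `D + [0, ∞) c` and
`(-∞, 0] × D` to `D + [0, ∞) d`; it parametrizes two half-spaces glued along `D`. -/
def foldedMap (D : Submodule ℝ V) (c d : V) (p : ℝ × D) : V :=
  p.2 + max p.1 0 • c + max (-p.1) 0 • d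

lemma foldedMap_of_nonneg {p : ℝ × D} (hp : 0 ≤ p.1) : foldedMap D c d p = p.2 + p.1 • c := by
  simp [foldedMap, hp]

lemma foldedMap_of_nonpos {p : ℝ × D} (hp : p.1 ≤ 0) : foldedMap D c d p = p.2 + (-p.1) • d := by
  simp [foldedMap, hp]

lemma continuous_foldedMap : Continuous (foldedMap D c d) := by
  unfold foldedMap
  fun_prop

lemma foldedMap_injective
    (hcd : ∀ t u : ℝ, 0 ≤ t → 0 ≤ u → t • c - u • d ∈ D → t = 0 ∧ u = 0) :
    Function.Injective (foldedMap D c d) := by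
  intro p q hpq
  wlog hle : q.1 ≤ p.1 generalizing p q
  · exact (this hpq.symm (le_of_not_ge hle)).symm
  have hmem : (max p.1 0 - max q.1 0) • c - (max (-q.1) 0 - max (-p.1) 0) • d ∈ D := by
    convert (q.2 - p.2).2 using 1
    simp only [foldedMap] at hpq
    rw [Submodule.coe_sub]
    linear_combination (norm := module) hpq
  obtain ⟨hpos, hneg⟩ := hcd _ _ (sub_nonneg.2 (max_le_max_right 0 hle))
    (sub_nonneg.2 (max_le_max_right 0 (neg_le_neg hle))) hmem
  have hfst : p.1 = q.1 := by
    have hparts (x : ℝ) : x = max x 0 - max (-x) 0 := by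
      rw [← posPart_def, ← negPart_def, posPart_sub_negPart]
    rw [hparts p.1, hparts q.1]
    linarith
  refine Prod.ext hfst (Subtype.ext ?_)
  simpa [foldedMap, hfst] using hpq

lemma isClosedEmbedding_coprod_toSpanSingleton [FiniteDimensional ℝ D] (hc : c ∉ D) :
    IsClosedEmbedding ((LinearMap.toSpanSingleton ℝ V c).coprod D.subtype) := by
  have hc0 : c ≠ 0 := by
    rintro rfl
    exact hc D.zero_mem
  refine LinearMap.isClosedEmbedding_of_injective ?_
  rw [LinearMap.ker_coprod_of_disjoint_range, LinearMap.ker_toSpanSingleton ℝ hc0,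
    Submodule.ker_subtype, Submodule.prod_bot]
  rwa [LinearMap.range_toSpanSingleton, Submodule.range_subtype, disjoint_comm,
    Submodule.disjoint_span_singleton' hc0]

lemma isClosedEmbedding_foldedMap [FiniteDimensional ℝ D]
    (hcd : ∀ t u : ℝ, 0 ≤ t → 0 ≤ u → t • c - u • d ∈ D → t = 0 ∧ u = 0) :
    IsClosedEmbedding (foldedMap D c d) := by
  have hc : c ∉ D := fun hc => one_ne_zero (hcd 1 0 zero_le_one le_rfl (by simpa using hc)).1
  have hd : -d ∉ D := fun hd => one_ne_zero (hcd 0 1 le_rfl zero_le_one (by simpa using hd)).2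
  refine .of_continuous_injective_isClosedMap continuous_foldedMap (foldedMap_injective hcd)
    fun C hC => ?_
  have himage : foldedMap D c d '' C =
      (LinearMap.toSpanSingleton ℝ V c).coprod D.subtype '' (C ∩ {p | 0 ≤ p.1}) ∪
        (LinearMap.toSpanSingleton ℝ V (-d)).coprod D.subtype '' (C ∩ {p | p.1 ≤ 0}) := by
    have hC_eq : C = C ∩ {p | 0 ≤ p.1} ∪ C ∩ {p | p.1 ≤ 0} := by
      ext p
      simp [← and_or_left, le_total]
    conv_lhs => rw [hC_eq, image_union]
    congr 1 <;> refine image_congr fun p hp => ?_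
    · rw [foldedMap_of_nonneg hp.2]
      simp [add_comm]
    · rw [foldedMap_of_nonpos hp.2]
      simp [add_comm]
  rw [himage]
  exact ((isClosedEmbedding_coprod_toSpanSingleton hc).isClosedMap _
      (hC.inter (isClosed_le continuous_const continuous_fst))).union
    ((isClosedEmbedding_coprod_toSpanSingleton hd).isClosedMap _
      (hC.inter (isClosed_le continuous_fst continuous_const)))

end FoldedMap

section ConvexHullInsert

open Set Module Topology

variable {V : Type*} [NormedAddCommGroup V] [NormedSpace ℝ V] {s : Finset V} {a b y : V} {S : Set V}

lemma parametrizesAt_of_convexHull_mem_nhdsWithin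
    (hs : ∀ᶠ v : vectorSpan ℝ (s : Set V) in 𝓝 0, y + v ∈ convexHull ℝ (s : Set V))
    (hsS : convexHull ℝ (s : Set V) ⊆ S) (hS : convexHull ℝ (s : Set V) ∈ 𝓝[S] y) :
    ParametrizesAt (fun v : vectorSpan ℝ (s : Set V) => y + (v : V)) S y where
  isEmbedding := (Homeomorph.addLeft y).isEmbedding.comp .subtypeVal
  map_zero := by simp
  eventually_mem := hs.mono fun _ hv => hsS hv
  range_mem_nhdsWithin := by
    have hy : y ∈ convexHull ℝ (s : Set V) := by simpa using hs.self_of_nhds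
    refine mem_of_superset hS fun z hz => ⟨⟨z - y, sub_mem_vectorSpan hz hy⟩, add_sub_cancel y z⟩

variable [DecidableEq V]

lemma sub_notMem_vectorSpan (ha : a ∉ s)
    (hind : AffineIndependent ℝ (Subtype.val : {x // x ∈ insert a s} → V))
    (hy : y ∈ convexHull ℝ (s : Set V)) : a - y ∉ vectorSpan ℝ (s : Set V) := by
  intro hmem
  have ha_span : a ∈ affineSpan ℝ (s : Set V) := by
    rw [← sub_add_cancel a y]
    exact AffineSubspace.vadd_mem_of_mem_direction
      ((direction_affineSpan ℝ (s : Set V)).symm ▸ hmem) (convexHull_subset_affineSpan _ hy)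
  refine hind.notMem_affineSpan_sdiff ⟨a, Finset.mem_insert_self a s⟩ univ ?_
  convert ha_span
  ext z
  aesop

lemma exists_eq_add_smul_of_mem_convexHull_insert (hy : y ∈ convexHull ℝ (s : Set V)) {z : V}
    (hz : z ∈ convexHull ℝ ((insert a s : Finset V) : Set V)) :
    ∃ v ∈ vectorSpan ℝ (s : Set V), ∃ t : ℝ, 0 ≤ t ∧ z = y + (v + t • (a - y)) := by
  rw [Finset.coe_insert, convexHull_insert (convexHull_nonempty_iff.1 ⟨y, hy⟩),
    convexJoin_singleton_left] at hz
  obtain ⟨q, hq, t, u, ht, -, htu, rfl⟩ := mem_iUnion₂.1 hz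
  refine ⟨u • (q - y), Submodule.smul_mem _ _ (sub_mem_vectorSpan hq hy), t, ht, ?_⟩
  rw [← eq_sub_iff_add_eq'] at htu
  subst htu
  module

lemma convexHull_subset_convexHull_insert :
    convexHull ℝ (s : Set V) ⊆ convexHull ℝ ((insert a s : Finset V) : Set V) :=
  convexHull_mono (Finset.coe_subset.2 (Finset.subset_insert a s))

lemma eventually_add_mem_convexHull_insert
    (hs : ∀ᶠ v : vectorSpan ℝ (s : Set V) in 𝓝 0, y + v ∈ convexHull ℝ (s : Set V)) :
    ∀ᶠ p : ℝ × vectorSpan ℝ (s : Set V) in 𝓝 0, 0 ≤ p.1 →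
      y + (p.2 + p.1 • (a - y)) ∈ convexHull ℝ ((insert a s : Finset V) : Set V) := by
  have hdouble : Tendsto (fun p : ℝ × vectorSpan ℝ (s : Set V) => (2 : ℝ) • p.2) (𝓝 0) (𝓝 0) :=
    Continuous.tendsto' (by fun_prop) _ _ (by simp)
  have hfst : Tendsto (fun p : ℝ × vectorSpan ℝ (s : Set V) => p.1) (𝓝 0) (𝓝 0) :=
    continuous_fst.tendsto' _ _ rfl
  filter_upwards [hdouble.eventually hs, hfst.eventually (gt_mem_nhds (one_half_pos (α := ℝ)))]
    with p hp hp1 hp0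
  have hconv := convex_convexHull ℝ ((insert a s : Finset V) : Set V)
  have ha : a ∈ convexHull ℝ ((insert a s : Finset V) : Set V) :=
    subset_convexHull ℝ _ (Finset.mem_insert_self a s)
  have hy : y ∈ convexHull ℝ (s : Set V) := by simpa using hs.self_of_nhds
  have hya := hconv (convexHull_subset_convexHull_insert hy) ha (a := 1 - 2 * p.1) (b := 2 * p.1)
    (by linarith) (by linarith) (by ring)
  convert hconv (convexHull_subset_convexHull_insert hp) hya (a := 1 / 2) (b := 1 / 2)
    (by norm_num) (by norm_num) (by norm_num) using 1
  push_cast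
  module

lemma eq_zero_of_smul_sub_smul_mem_vectorSpan
    (hs : ∀ᶠ v : vectorSpan ℝ (s : Set V) in 𝓝 0, y + v ∈ convexHull ℝ (s : Set V))
    (ha : a - y ∉ vectorSpan ℝ (s : Set V)) (hab : convexHull ℝ ((insert a s : Finset V) : Set V) ∩
      convexHull ℝ ((insert b s : Finset V) : Set V) ⊆ convexHull ℝ (s : Set V))
    {t u : ℝ} (ht : 0 ≤ t) (hu : 0 ≤ u)
    (htu : t • (a - y) - u • (b - y) ∈ vectorSpan ℝ (s : Set V)) : t = 0 := by
  have hray (x : ℝ) (w : vectorSpan ℝ (s : Set V)) :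
      Tendsto (fun ε : ℝ => (ε * x, ε • w)) (𝓝[>] 0) (𝓝 0) := by
    refine (Continuous.tendsto' (by fun_prop) _ _ ?_).mono_left nhdsWithin_le_nhds
    simp [← Prod.zero_eq_mk]
  have hy : y ∈ convexHull ℝ (s : Set V) := by simpa using hs.self_of_nhds
  obtain ⟨ε, ⟨hεa, hεb⟩, hε⟩ := (((hray t 0).eventually
    (eventually_add_mem_convexHull_insert (a := a) hs)).and ((hray u ⟨_, htu⟩).eventually
      (eventually_add_mem_convexHull_insert (a := b) hs))).and self_mem_nhdsWithin |>.exists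
  have hεt := hεa (mul_nonneg hε.le ht)
  have hmem := sub_mem_vectorSpan (hab ⟨hεt, ?_⟩) hy
  · by_contra ht0
    rw [add_sub_cancel_left, smul_zero, Submodule.coe_zero, zero_add,
      Submodule.smul_mem_iff _ (mul_ne_zero hε.ne' ht0)] at hmem
    exact ha hmem
  · convert hεb (mul_nonneg hε.le hu) using 2
    push_cast
    module

lemma parametrizesAt_foldedMap
    (hs : ∀ᶠ v : vectorSpan ℝ (s : Set V) in 𝓝 0, y + v ∈ convexHull ℝ (s : Set V))
    (ha : a - y ∉ vectorSpan ℝ (s : Set V)) (hb : b - y ∉ vectorSpan ℝ (s : Set V))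
    (hab : convexHull ℝ ((insert a s : Finset V) : Set V) ∩
      convexHull ℝ ((insert b s : Finset V) : Set V) ⊆ convexHull ℝ (s : Set V))
    (haS : convexHull ℝ ((insert a s : Finset V) : Set V) ⊆ S)
    (hbS : convexHull ℝ ((insert b s : Finset V) : Set V) ⊆ S)
    (hS : convexHull ℝ ((insert a s : Finset V) : Set V) ∪
      convexHull ℝ ((insert b s : Finset V) : Set V) ∈ 𝓝[S] y) :
    ParametrizesAt (fun p => y + foldedMap (vectorSpan ℝ (s : Set V)) (a - y) (b - y) p) S y where
  isEmbedding := by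
    refine (Homeomorph.addLeft y).isEmbedding.comp (isClosedEmbedding_foldedMap ?_).isEmbedding
    intro t u ht hu htu
    refine ⟨eq_zero_of_smul_sub_smul_mem_vectorSpan hs ha hab ht hu htu,
      eq_zero_of_smul_sub_smul_mem_vectorSpan hs hb (inter_comm _ _ ▸ hab) hu ht ?_⟩
    rwa [← neg_sub, Submodule.neg_mem_iff]
  map_zero := by simp [foldedMap]
  eventually_mem := by
    have hflip : Tendsto (fun p : ℝ × vectorSpan ℝ (s : Set V) => (-p.1, p.2)) (𝓝 0) (𝓝 0) :=
      Continuous.tendsto' (by fun_prop) _ _ (by simp [← Prod.zero_eq_mk])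
    filter_upwards [eventually_add_mem_convexHull_insert (a := a) hs,
      hflip.eventually (eventually_add_mem_convexHull_insert (a := b) hs)] with p hpa hpb
    rcases le_total 0 p.1 with hp | hp
    · rw [foldedMap_of_nonneg hp]
      exact haS (hpa hp)
    · rw [foldedMap_of_nonpos hp]
      exact hbS (hpb (neg_nonneg.2 hp))
  range_mem_nhdsWithin := by
    have hy : y ∈ convexHull ℝ (s : Set V) := by simpa using hs.self_of_nhds
    refine mem_of_superset hS ?_
    rintro z (hz | hz) <;>
      obtain ⟨v, hv, t, ht, rfl⟩ := exists_eq_add_smul_of_mem_convexHull_insert hy hz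
    · exact ⟨(t, ⟨v, hv⟩), congrArg (y + ·) (foldedMap_of_nonneg ht)⟩
    · refine ⟨(-t, ⟨v, hv⟩), congrArg (y + ·) ?_⟩
      rw [foldedMap_of_nonpos (neg_nonpos.2 ht), neg_neg]

end ConvexHullInsert

section SimplicialComplex

open Set Module Topology

variable {V : Type*} [NormedAddCommGroup V] [NormedSpace ℝ V] {K : SimplicialComplex ℝ V}
  {s : Finset V} {y : V}

/-- `s` is the carrier of `y` in `K`: the smallest simplex of `K` containing `y`, that is, the one
whose open simplex contains `y`. -/
structure IsCarrier (K : SimplicialComplex ℝ V) (y : V) (s : Finset V) : Prop where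
  mem_faces : s ∈ K.faces
  mem_convexHull : y ∈ convexHull ℝ (s : Set V)
  subset_of_mem_convexHull : ∀ t ∈ K.faces, y ∈ convexHull ℝ (t : Set V) → s ⊆ t

lemma exists_isCarrier (hy : y ∈ K.space) : ∃ s, IsCarrier K y s := by
  obtain ⟨s, ⟨hs, hys⟩, hmin⟩ :=
    exists_minimal_of_wellFoundedLT _ (SimplicialComplex.mem_space_iff.1 hy)
  refine ⟨s, hs, hys, fun t ht hyt => ?_⟩
  have hyst := K.inter_subset_convexHull hs ht ⟨hys, hyt⟩
  rw [← Finset.coe_inter] at hyst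
  have hst : s ∩ t ∈ K.faces := K.down_closed hs Finset.inter_subset_left
    (Finset.coe_nonempty.1 (convexHull_nonempty_iff.1 ⟨y, hyst⟩))
  exact Finset.inter_eq_left.1 (Finset.inter_subset_left.antisymm
    (hmin ⟨hst, hyst⟩ Finset.inter_subset_left))

lemma IsCarrier.eventually_add_mem_convexHull (hs : IsCarrier K y s) :
    ∀ᶠ v : vectorSpan ℝ (s : Set V) in 𝓝 0, y + v ∈ convexHull ℝ (s : Set V) := by
  refine AngleDefectPaper.eventually_add_mem_convexHull hs.mem_convexHull fun i hi hyi => ?_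
  have hface : s.erase i ∈ K.faces := K.down_closed hs.mem_faces (Finset.erase_subset i s)
    (Finset.coe_nonempty.1 (convexHull_nonempty_iff.1 ⟨y, hyi⟩))
  exact Finset.notMem_erase i s (hs.subset_of_mem_convexHull _ hface hyi hi)

lemma IsCarrier.mem_nhdsWithin_space (hs : IsCarrier K y s) (hfin : K.faces.Finite) {C : Set V}
    (hC : ∀ t ∈ K.faces, s ⊆ t → convexHull ℝ (t : Set V) ⊆ C) : C ∈ 𝓝[K.space] y := by
  have hclosed : IsClosed (⋃ t ∈ {t ∈ K.faces | ¬ s ⊆ t}, convexHull ℝ (t : Set V)) :=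
    (hfin.subset (sep_subset _ _)).isClosed_biUnion fun t _ => isClosed_convexHull t
  have hy : y ∉ ⋃ t ∈ {t ∈ K.faces | ¬ s ⊆ t}, convexHull ℝ (t : Set V) := by
    simp only [mem_iUnion₂, not_exists]
    exact fun t ht hyt => ht.2 (hs.subset_of_mem_convexHull t ht.1 hyt)
  filter_upwards [mem_nhdsWithin_of_mem_nhds (hclosed.isOpen_compl.mem_nhds hy),
    self_mem_nhdsWithin] with z hz hzK
  obtain ⟨t, ht, hzt⟩ := SimplicialComplex.mem_space_iff.1 hzK
  by_cases hst : s ⊆ t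
  · exact hC t ht hst hzt
  · exact absurd (mem_iUnion₂.2 ⟨t, ⟨ht, hst⟩, hzt⟩) hz

lemma IsCarrier.parametrizesAt_of_forall_eq (hs : IsCarrier K y s) (hfin : K.faces.Finite)
    (hmax : ∀ t ∈ K.faces, s ⊆ t → t = s) :
    ParametrizesAt (fun v : vectorSpan ℝ (s : Set V) => y + (v : V)) K.space y :=
  parametrizesAt_of_convexHull_mem_nhdsWithin hs.eventually_add_mem_convexHull
    (SimplicialComplex.convexHull_subset_space hs.mem_faces)
    (hs.mem_nhdsWithin_space hfin fun t ht hst => hmax t ht hst ▸ subset_rfl)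

lemma IsCarrier.parametrizesAt_foldedMap [DecidableEq V] (hs : IsCarrier K y s)
    (hfin : K.faces.Finite) {a b : V}
    (ha : a ∉ s) (haK : insert a s ∈ K.faces) (hb : b ∉ s) (hbK : insert b s ∈ K.faces)
    (hab : a ≠ b) (hstar : ∀ t ∈ K.faces, s ⊆ t → t = s ∨ t = insert a s ∨ t = insert b s) :
    ParametrizesAt (fun p => y + foldedMap (vectorSpan ℝ (s : Set V)) (a - y) (b - y) p)
      K.space y := by
  refine AngleDefectPaper.parametrizesAt_foldedMap hs.eventually_add_mem_convexHull
    (sub_notMem_vectorSpan ha (K.indep haK) hs.mem_convexHull)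
    (sub_notMem_vectorSpan hb (K.indep hbK) hs.mem_convexHull) ?_
    (SimplicialComplex.convexHull_subset_space haK) (SimplicialComplex.convexHull_subset_space hbK)
    (hs.mem_nhdsWithin_space hfin fun t ht hst => ?_)
  · refine (K.inter_subset_convexHull haK hbK).trans (convexHull_mono ?_)
    rintro z ⟨hza, hzb⟩
    simp only [Finset.mem_coe, Finset.mem_insert] at hza hzb ⊢
    grind
  · rcases hstar t ht hst with rfl | rfl | rfl
    · exact convexHull_subset_convexHull_insert.trans subset_union_left
    · exact subset_union_left
    · exact subset_union_right

lemma finrank_vectorSpan_of_mem_faces (hs : s ∈ K.faces) :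
    finrank ℝ (vectorSpan ℝ (s : Set V)) + 1 = s.card := by
  have hcard : Fintype.card s = s.card - 1 + 1 := by
    rw [Fintype.card_coe, Nat.sub_add_cancel (K.nonempty_of_mem_faces hs).card_pos]
  have hrank := (K.indep hs).finrank_vectorSpan hcard
  rw [Subtype.range_coe_subtype, Finset.setOfPred_mem] at hrank
  rw [hrank, ← hcard, Fintype.card_coe]

end SimplicialComplex

section Pseudomanifold

open Set Module Topology

variable {n : ℕ} {K : SimplicialComplex ℝ (Euc N)} {s : Finset (Euc N)} {y : Euc N}

lemma exists_insert_of_ncard_nSimplicesOn_eq_two (h : (nSimplicesOn n K s).ncard = 2)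
    (hs : s.card = n) : ∃ a b, a ≠ b ∧ a ∉ s ∧ b ∉ s ∧
      nSimplicesOn n K s = {insert a s, insert b s} := by
  obtain ⟨σ, τ, hστ, hσ⟩ := ncard_eq_two.1 h
  have hinsert {ρ} (hρ : ρ ∈ nSimplicesOn n K s) : ∃ a ∉ s, insert a s = ρ :=
    Finset.exists_eq_insert_iff.2 ⟨hρ.2.2, by rw [hs, hρ.2.1]⟩
  obtain ⟨a, ha, rfl⟩ := hinsert (hσ ▸ mem_insert σ {τ})
  obtain ⟨b, hb, rfl⟩ := hinsert (hσ ▸ mem_insert_of_mem _ (mem_singleton τ))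
  exact ⟨a, b, ne_of_apply_ne (insert · s) hστ, ha, hb, hσ⟩

lemma exists_parametrizesAt_space (hfin : K.faces.Finite) (hdim : ∀ s ∈ K.faces, s.card ≤ n + 1)
    (h2 : ∀ s ∈ K.faces, s.card = n → (nSimplicesOn n K s).ncard = 2)
    (hs : IsCarrier K y s) (hn : n ≤ s.card) :
    ∃ ψ : Euc n → Euc N, ParametrizesAt ψ K.space y := by
  have hrank := finrank_vectorSpan_of_mem_faces hs.mem_faces
  rcases hn.eq_or_lt with hcard | hcard
  · obtain ⟨a, b, hab, ha, hb, hstar⟩ :=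
      exists_insert_of_ncard_nSimplicesOn_eq_two (h2 s hs.mem_faces hcard.symm) hcard.symm
    have haK : insert a s ∈ nSimplicesOn n K s := hstar ▸ mem_insert _ _
    have hbK : insert b s ∈ nSimplicesOn n K s := hstar ▸ mem_insert_of_mem _ (mem_singleton _)
    have e : Euc n ≃L[ℝ] ℝ × vectorSpan ℝ (s : Set (Euc N)) :=
      .ofFinrankEq (by rw [finrank_euclideanSpace_fin, finrank_prod, finrank_self]; omega)
    refine ⟨_, (hs.parametrizesAt_foldedMap hfin ha haK.1 hb hbK.1 hab
      fun t ht hst => ?_).comp_continuousLinearEquiv e⟩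
    by_cases htn : t.card = n + 1
    · have ht_mem : t ∈ nSimplicesOn n K s := ⟨ht, htn, hst⟩
      rw [hstar] at ht_mem
      exact .inr (by simpa using ht_mem)
    · have := hdim t ht
      exact .inl (Finset.eq_of_subset_of_card_le hst (by omega)).symm
  · have e : Euc n ≃L[ℝ] vectorSpan ℝ (s : Set (Euc N)) :=
      .ofFinrankEq (by rw [finrank_euclideanSpace_fin]; have := hdim s hs.mem_faces; omega)
    refine ⟨_, (hs.parametrizesAt_of_forall_eq hfin
      fun t ht hst => ?_).comp_continuousLinearEquiv e⟩
    exact (Finset.eq_of_subset_of_card_le hst ((hdim t ht).trans hcard)).symm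

lemma notMem_csetAux (hn : 1 ≤ n) (hfin : K.faces.Finite) (hdim : ∀ s ∈ K.faces, s.card ≤ n + 1)
    (h2 : ∀ s ∈ K.faces, s.card = n → (nSimplicesOn n K s).ncard = 2) {r : ℕ} (hr : r ≠ 2) :
    y ∉ csetAux n K r := by
  rintro ⟨hyK, U, hU, hUS, h, hy⟩
  let g : Euc (n - 1) → Euc N := fun v => h.symm (⟨0, zero_mem_Tcone r⟩, v)
  have hg : Continuous g := by fun_prop
  have hg_inj : Function.Injective g := fun v w hvw =>
    (Prod.ext_iff.1 (h.symm.injective (Subtype.ext hvw))).2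
  have hyU : y ∈ U := mem_of_mem_nhdsWithin hyK hU
  have hgy : g (h ⟨y, hyU⟩).2 = y := by
    have hapex : (⟨0, zero_mem_Tcone r⟩, (h ⟨y, hyU⟩).2) = h ⟨y, hyU⟩ :=
      Prod.ext (Subtype.ext (hy hyU).symm) rfl
    simp only [g, hapex, h.symm_apply_apply]
  have hgU : ∀ᶠ v in 𝓝 (h ⟨y, hyU⟩).2, U ∈ 𝓝[K.space] (g v) := by
    have hg_tendsto : Tendsto g (𝓝 (h ⟨y, hyU⟩).2) (𝓝[K.space] y) := tendsto_nhdsWithin_iff.2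
      ⟨hg.tendsto' _ _ hgy, .of_forall fun v => hUS (h.symm _).2⟩
    exact hg_tendsto.eventually (eventually_eventually_nhdsWithin.2 hU)
  obtain ⟨v, hvU, hv⟩ := exists_forall_notMem_convexHull hg hg_inj
    (hfin.subset (sep_subset K.faces fun s => s.card ≤ n - 1))
    (fun s hs => hs.2.trans_eq finrank_euclideanSpace_fin.symm) hgU
  obtain ⟨s, hs⟩ := exists_isCarrier (hUS (h.symm (⟨0, zero_mem_Tcone r⟩, v)).2 : g v ∈ K.space)
  have hns : n ≤ s.card := by
    by_contra! hlt
    exact hv s ⟨hs.mem_faces, by omega⟩ hs.mem_convexHull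
  obtain ⟨ψ, hψ⟩ := exists_parametrizesAt_space hfin hdim h2 hs hns
  have hrank : finrank ℝ (Euc n) = finrank ℝ (Euc (n - 1)) + 1 := by
    simp only [finrank_euclideanSpace_fin]
    omega
  have hgvU : g v ∈ U := (h.symm _).2
  have happex : ((h ⟨g v, hgvU⟩).1 : ℝ × ℝ) = 0 := by simp [g]
  exact hr ((hψ.le_two_of_homeomorph hrank hUS hgvU h happex).antisymm
    (hψ.two_le_of_homeomorph hrank hvU hgvU h happex))

lemma strRank_eq_one (hn : 1 ≤ n) (hfin : K.faces.Finite) (hdim : ∀ s ∈ K.faces, s.card ≤ n + 1)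
    (h2 : ∀ s ∈ K.faces, s.card = n → (nSimplicesOn n K s).ncard = 2) (hs : s ∈ K.faces) :
    strRank n K s = 1 := by
  obtain ⟨x, hx⟩ : (openSimplex s).Nonempty := Set.Nonempty.intrinsicInterior
    (convex_convexHull ℝ _) (Finset.coe_nonempty.2 (K.nonempty_of_mem_faces hs)).convexHull
  exact dif_neg fun ⟨r, hr, hsub⟩ => notMem_csetAux hn hfin hdim h2 hr (hsub hx)

end Pseudomanifold

section EulerCharacteristic

variable {n : ℕ} {K : SimplicialComplex ℝ (Euc N)}

lemma fcount_eq_card_filter (hfin : K.faces.Finite) (k : ℕ) :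
    fcount K.faces k = {s ∈ hfin.toFinset | s.card - 1 = k}.card := by
  rw [fcount, ← Set.ncard_coe_finset]
  congr 1
  ext s
  simp only [Set.mem_ofPred_eq, Finset.coe_filter, Set.Finite.mem_toFinset]
  refine and_congr_right fun hs => ?_
  have := (K.nonempty_of_mem_faces hs).card_pos
  omega

lemma eulerChar_eq_sum (hfin : K.faces.Finite) :
    eulerChar K.faces = ∑ s ∈ hfin.toFinset, (-1) ^ (s.card - 1) := by
  rw [Finset.sum_comp (fun k => (-1 : ℤ) ^ k), eulerChar, finsum_eq_sum_of_support_subset]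
  · refine Finset.sum_congr rfl fun k _ => ?_
    rw [fcount_eq_card_filter hfin, nsmul_eq_mul, mul_comm]
  · intro k hk
    have hcard := Int.natCast_ne_zero.1 (right_ne_zero_of_mul hk)
    rw [fcount_eq_card_filter hfin, Finset.card_ne_zero] at hcard
    obtain ⟨s, hsk⟩ := hcard
    obtain ⟨hs, rfl⟩ := Finset.mem_filter.1 hsk
    exact Finset.mem_coe.2 (Finset.mem_image_of_mem _ hs)

end EulerCharacteristic

theorem stratEuler_eq_eulerChar_general {n : ℕ} (hn : 1 ≤ n) (K : SimplicialComplex ℝ (Euc N))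
    (hfin : K.faces.Finite) (hdim : IsNDim n K)
    (h2 : ∀ η ∈ K.faces, η.card = n → (nSimplicesOn n K η).ncard = 2) :
    stratEuler n K = (eulerChar K.faces : ℝ) := by
  rw [stratEuler, finsum_mem_eq_finite_toFinset_sum _ hfin, eulerChar_eq_sum hfin]
  push_cast
  refine Finset.sum_congr rfl fun η hη => ?_
  rw [strRank_eq_one hn hfin hdim.1 h2 (hfin.mem_toFinset.1 hη), one_mul]

/-- If `K` is a finite `n`-dimensional simplicial complex (`n ≥ 2`) in which
every `(n-1)`-simplex is a face of precisely two `n`-simplices, then the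
stratified Euler characteristic equals the combinatorial Euler characteristic:
`χˢ(K) = χ(K)`. -/
theorem stratEuler_eq_eulerChar {N n : ℕ} (hn : 2 ≤ n)
    (K : SimplicialComplex ℝ (Euc N)) (hfin : K.faces.Finite) (hdim : IsNDim n K)
    (h2 : ∀ η ∈ K.faces, η.card = n → (nSimplicesOn n K η).ncard = 2) :
    stratEuler n K = (eulerChar K.faces : ℝ) :=
  stratEuler_eq_eulerChar_general (one_le_two.trans hn) K hfin hdim h2

end AngleDefectPaper
end
end
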